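/- arXiv:1705.09707 — 2 statements merged into one kernel-verified Lean document; each statement's English description precedes it below -/
import Mathlib

section
/- Let G ↷ (X, μ) be a pmp action of a countable group, let F be a G-invariant sub-σ-algebra, and let P and Q be countable Borel partitions of X with H_μ(P | F) < ∞ and H_μ(Q | F) < ∞. Then |rh_{G,μ}(P | F) − rh_{G,μ}(Q | F)| ≤ H_μ(P | σ(Q) ∨ F) + H_μ(Q | σ(P) ∨ F), where σ(P) and σ(Q) denote the σ-algebras generated by the partitions P and Q. -/
open MeasureTheory Set Function
open scoped ENNReal symmDiff

/-- A set in a measurable space is *analytic* if it is the image of a Borel subset of a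
standard Borel space under a Borel (measurable) map. -/
def IsAnalyticS {W : Type*} [MeasurableSpace W] (A : Set W) : Prop :=
  ∃ (Z : Type) (mZ : MeasurableSpace Z), @StandardBorelSpace Z mZ ∧
    ∃ (B : Set Z) (f : Z → W), MeasurableSet[mZ] B ∧ @Measurable Z W mZ _ f ∧ f '' B = A

/-- The smallest `G`-invariant sub-σ-algebra containing the collection `ξ`. -/
def sigmaG (G : Type*) {X : Type*} [Group G] [MulAction G X] (ξ : Set (Set X)) :
    MeasurableSpace X :=
  MeasurableSpace.generateFrom {B | ∃ (g : G), ∃ A ∈ ξ, B = (fun x => g • x) ⁻¹' A}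

/-- The σ-algebra of `G`-invariant measurable sets. -/
def invSigma (G X : Type*) [Group G] [MulAction G X] [MeasurableSpace X] :
    MeasurableSpace X :=
  MeasurableSpace.generateFrom {A | MeasurableSet A ∧ ∀ g : G, (fun x => g • x) ⁻¹' A = A}

/-- Conditional Shannon entropy `H_μ(α | m)` of a countable partition `α` given a
sub-σ-algebra `m`, valued in `[0,∞]`. -/
noncomputable def condEnt {X : Type*} (m : MeasurableSpace X) [mX : MeasurableSpace X]
    (μ : Measure X) {ι : Type*} (α : ι → Set X) : ℝ≥0∞ :=
  ∫⁻ x, ∑' i, ENNReal.ofReal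
    (Real.negMulLog ((μ[(α i).indicator (fun _ => (1 : ℝ)) | m]) x)) ∂μ

/-- Shannon entropy `H_μ(α)` of a countable partition. -/
noncomputable def shEnt {X : Type*} [MeasurableSpace X] (μ : Measure X)
    {ι : Type*} (α : ι → Set X) : ℝ≥0∞ :=
  ∑' i, ENNReal.ofReal (Real.negMulLog (μ (α i)).toReal)

/-- `α` is a countable Borel partition of `X` (indexed by `ℕ`, cells may be empty). -/
def IsPartition {X : Type*} [MeasurableSpace X] (α : ℕ → Set X) : Prop :=
  (∀ i, MeasurableSet (α i)) ∧ Pairwise (Function.onFun Disjoint α) ∧ (⋃ i, α i) = univ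

/-- Every set of `ξ` agrees with an `m`-measurable set modulo `μ`-null sets. -/
def SubsetMod {X : Type*} (m : MeasurableSpace X) [mX : MeasurableSpace X] (μ : Measure X)
    (ξ : Set (Set X)) : Prop :=
  ∀ A ∈ ξ, ∃ B, MeasurableSet[m] B ∧ μ (A ∆ B) = 0

/-- Outer Rokhlin entropy `rh_{G,μ}(ξ | F)`. -/
noncomputable def outerRokhlin (G : Type*) {X : Type*} (ξ : Set (Set X))
    (F : MeasurableSpace X) [Group G] [MulAction G X] [mX : MeasurableSpace X]
    (μ : Measure X) : ℝ≥0∞ :=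
  sInf { h | ∃ α : ℕ → Set X, IsPartition α ∧
      SubsetMod (sigmaG G (Set.range α) ⊔ F ⊔ invSigma G X) μ ξ ∧
      h = condEnt (F ⊔ invSigma G X) μ α }

/-- Rokhlin entropy `rh_G(X, μ | F)`. -/
noncomputable def rokhlin (G : Type*) {X : Type*} (F : MeasurableSpace X) [Group G]
    [MulAction G X] [mX : MeasurableSpace X] (μ : Measure X) : ℝ≥0∞ :=
  outerRokhlin G {A | MeasurableSet A} F μ

/-- Outer Rokhlin entropy `rh_{G,μ}(S | F)` of a sub-σ-algebra `S`. -/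
noncomputable def outerRokhlinAlg (G : Type*) {X : Type*} (S F : MeasurableSpace X) [Group G]
    [MulAction G X] [mX : MeasurableSpace X] (μ : Measure X) : ℝ≥0∞ :=
  outerRokhlin G {A | MeasurableSet[S] A} F μ

/-- The action of `G` on `(X, μ)` is probability-measure-preserving. -/
def IsPmp (G : Type*) {X : Type*} [Group G] [MulAction G X] [MeasurableSpace X]
    (μ : Measure X) : Prop :=
  ∀ g : G, MeasurePreserving (fun x => g • x) μ μ

/-- Aperiodicity: μ-almost-every `G`-orbit is infinite. -/
def Aperiodic (G : Type*) {X : Type*} [Group G] [MulAction G X] [MeasurableSpace X]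
    (μ : Measure X) : Prop :=
  ∀ᵐ x ∂μ, (MulAction.orbit G x).Infinite

/-- Ergodicity of a measure: every invariant Borel set is null or conull. -/
def IsErgodicInv (G : Type*) {X : Type*} [Group G] [MulAction G X] [MeasurableSpace X]
    (ν : Measure X) : Prop :=
  ∀ A : Set X, MeasurableSet A → (∀ g : G, (fun x => g • x) ⁻¹' A = A) → ν A = 0 ∨ ν A = 1

/-- `F` is a `G`-invariant σ-algebra. -/
def InvariantAlg (G : Type*) {X : Type*} (F : MeasurableSpace X) [Group G] [MulAction G X] :
    Prop :=
  ∀ (g : G) (A : Set X), MeasurableSet[F] A → MeasurableSet[F] ((fun x => g • x) ⁻¹' A)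

/-- `F` is countably generated. -/
def CountablyGen {X : Type*} (F : MeasurableSpace X) : Prop :=
  ∃ S : Set (Set X), S.Countable ∧ F = MeasurableSpace.generateFrom S

/-- `π` is an ergodic decomposition map for `μ`. -/
def IsErgDecomp (G : Type*) {X : Type*} [Group G] [MulAction G X] [MeasurableSpace X]
    (μ : Measure X) (π : X → Measure X) : Prop :=
  Measurable π ∧
  (∀ x, IsProbabilityMeasure (π x) ∧ IsPmp G (π x) ∧ IsErgodicInv G (π x)) ∧
  (∀ (g : G) (x : X), π (g • x) = π x) ∧
  (∀ ν : Measure X, IsProbabilityMeasure ν → IsPmp G ν → IsErgodicInv G ν →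
      ν {x | π x = ν} = 1) ∧
  (∀ B : Set X, MeasurableSet B → μ B = ∫⁻ x, π x B ∂μ)

set_option linter.unusedSectionVars false
set_option linter.deprecated false

/-! ### Entropy lemmas -/

/-- Conditional probability of a set. -/
noncomputable def cp {X : Type*} (m : MeasurableSpace X) [mX : MeasurableSpace X]
    (μ : Measure X) (A : Set X) : X → ℝ := μ[A.indicator (fun _ => (1 : ℝ)) | m]

/-- Conditional entropy density of a countably valued function. -/
noncomputable def hd {X : Type*} (m : MeasurableSpace X) [mX : MeasurableSpace X]
    (μ : Measure X) {ι : Type*} (a : X → ι) (x : X) : ℝ≥0∞ :=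
  ∑' i, ENNReal.ofReal (Real.negMulLog (cp m μ (a ⁻¹' {i}) x))

/-- Entropy of a countably valued function. -/
noncomputable def Hf {X : Type*} [mX : MeasurableSpace X]
    (ν : Measure X) {ι : Type*} (a : X → ι) : ℝ≥0∞ :=
  ∑' i, ENNReal.ofReal (Real.negMulLog (ν.real (a ⁻¹' {i})))

lemma gibbs_term {t q : ℝ} (ht : 0 ≤ t) (hq : 0 ≤ q) (h0 : q = 0 → t = 0) :
    Real.negMulLog t + t ≤ t * (-Real.log q) + q := by
  rcases ht.eq_or_lt with rfl | ht
  · simpa using hq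
  · have hq' : 0 < q := lt_of_le_of_ne hq (fun h => ht.ne' (h0 h.symm))
    have h := Real.log_le_sub_one_of_pos (div_pos hq' ht)
    rw [Real.log_div hq'.ne' ht.ne'] at h
    have h2 := mul_le_mul_of_nonneg_left h ht.le
    have h3 : t * (q / t - 1) = q - t := by field_simp
    rw [h3] at h2
    unfold Real.negMulLog
    nlinarith

lemma gibbs {ι : Type*} (t q : ι → ℝ) (ht : ∀ i, 0 ≤ t i) (ht1 : ∀ i, t i ≤ 1)
    (hq : ∀ i, 0 ≤ q i) (hq1 : ∀ i, q i ≤ 1) (h0 : ∀ i, q i = 0 → t i = 0)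
    (hqs : ∑' i, ENNReal.ofReal (q i) ≤ 1) (hts : ∑' i, ENNReal.ofReal (t i) = 1) :
    ∑' i, ENNReal.ofReal (Real.negMulLog (t i)) ≤
      ∑' i, ENNReal.ofReal (t i * (-Real.log (q i))) := by
  have h : ∑' i, ENNReal.ofReal (Real.negMulLog (t i)) + 1 ≤
      ∑' i, ENNReal.ofReal (t i * (-Real.log (q i))) + 1 := by
    calc ∑' i, ENNReal.ofReal (Real.negMulLog (t i)) + 1
        = ∑' i, (ENNReal.ofReal (Real.negMulLog (t i)) + ENNReal.ofReal (t i)) := by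
          rw [ENNReal.tsum_add, hts]
      _ ≤ ∑' i, (ENNReal.ofReal (t i * (-Real.log (q i))) + ENNReal.ofReal (q i)) := by
          refine ENNReal.tsum_le_tsum fun i => ?_
          have h1 : 0 ≤ t i * (-Real.log (q i)) :=
            mul_nonneg (ht i) (by have := Real.log_nonpos (hq i) (hq1 i); linarith)
          rw [← ENNReal.ofReal_add (Real.negMulLog_nonneg (ht i) (ht1 i)) (ht i),
            ← ENNReal.ofReal_add h1 (hq i)]
          exact ENNReal.ofReal_le_ofReal (gibbs_term (ht i) (hq i) (h0 i))
      _ ≤ _ := by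
          rw [ENNReal.tsum_add]
          gcongr
  exact (ENNReal.add_le_add_iff_right ENNReal.one_ne_top).1 h

lemma tsum_inter_preimage {X ι : Type*} [Countable ι] [mX : MeasurableSpace X] (ν : Measure X)
    {s : Set X} (hs : MeasurableSet s) {a : X → ι} (ha : ∀ i, MeasurableSet (a ⁻¹' {i})) :
    ∑' i, ν (s ∩ a ⁻¹' {i}) = ν s := by
  rw [← measure_iUnion]
  · congr 1
    ext x; simp
  · intro i j hij
    refine Set.disjoint_left.2 fun x hx hx' => hij ?_
    rw [← hx.2, ← hx'.2]
  · exact fun i => hs.inter (ha i)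

lemma tsum_preimage {X ι : Type*} [Countable ι] [mX : MeasurableSpace X] (ν : Measure X)
    {a : X → ι} (ha : ∀ i, MeasurableSet (a ⁻¹' {i})) :
    ∑' i, ν (a ⁻¹' {i}) = ν univ := by
  simpa using tsum_inter_preimage ν MeasurableSet.univ ha

lemma Hf_pair {X ι κ : Type*} [Countable ι] [Countable κ] [mX : MeasurableSpace X]
    (ν : Measure X) [IsProbabilityMeasure ν] {a : X → ι} {b : X → κ}
    (ha : ∀ i, MeasurableSet (a ⁻¹' {i})) (hb : ∀ i, MeasurableSet (b ⁻¹' {i})) :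
    Hf ν (fun x => (a x, b x)) ≤ Hf ν a + Hf ν b := by
  have hpre : ∀ p : ι × κ, (fun x => (a x, b x)) ⁻¹' {p} = a ⁻¹' {p.1} ∩ b ⁻¹' {p.2} := by
    intro p; ext x; simp [Prod.ext_iff]
  have hab : ∀ p : ι × κ, MeasurableSet ((fun x => (a x, b x)) ⁻¹' {p}) := by
    intro p; rw [hpre]; exact (ha _).inter (hb _)
  have hreal : ∀ s : Set X, ENNReal.ofReal (ν.real s) = ν s := fun s => by simp
  unfold Hf
  refine (gibbs (fun p : ι × κ => ν.real ((fun x => (a x, b x)) ⁻¹' {p}))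
    (fun p => ν.real (a ⁻¹' {p.1}) * ν.real (b ⁻¹' {p.2}))
    (fun _ => measureReal_nonneg) (fun _ => measureReal_le_one)
    (fun _ => mul_nonneg measureReal_nonneg measureReal_nonneg)
    (fun _ => mul_le_one₀ measureReal_le_one measureReal_nonneg measureReal_le_one) ?_ ?_ ?_).trans ?_
  · intro p hp
    rw [hpre]
    rcases mul_eq_zero.1 hp with h | h
    · exact measureReal_mono_null inter_subset_left h
    · exact measureReal_mono_null inter_subset_right h
  · rw [ENNReal.tsum_prod (f := fun i j => ENNReal.ofReal (ν.real (a ⁻¹' {i}) * ν.real (b ⁻¹' {j})))]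
    simp_rw [ENNReal.ofReal_mul measureReal_nonneg, hreal, ENNReal.tsum_mul_left,
      tsum_preimage ν hb, ENNReal.tsum_mul_right, tsum_preimage ν ha]
    simp
  · simp_rw [hreal, tsum_preimage ν hab]; simp
  · have key : ∀ p : ι × κ, ENNReal.ofReal (ν.real ((fun x => (a x, b x)) ⁻¹' {p}) *
        (-Real.log (ν.real (a ⁻¹' {p.1}) * ν.real (b ⁻¹' {p.2})))) ≤
        ν (a ⁻¹' {p.1} ∩ b ⁻¹' {p.2}) * ENNReal.ofReal (-Real.log (ν.real (a ⁻¹' {p.1}))) +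
        ν (a ⁻¹' {p.1} ∩ b ⁻¹' {p.2}) * ENNReal.ofReal (-Real.log (ν.real (b ⁻¹' {p.2}))) := by
      intro p
      rw [hpre, ENNReal.ofReal_mul measureReal_nonneg, hreal, ← mul_add]
      gcongr
      refine (ENNReal.ofReal_le_ofReal ?_).trans ENNReal.ofReal_add_le
      by_cases h1 : ν.real (a ⁻¹' {p.1}) = 0
      · rw [h1]; simp
        exact Real.log_nonpos measureReal_nonneg measureReal_le_one
      by_cases h2 : ν.real (b ⁻¹' {p.2}) = 0
      · rw [h2]; simp
        exact Real.log_nonpos measureReal_nonneg measureReal_le_one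
      rw [Real.log_mul h1 h2]; linarith
    have hfin : ∀ s : Set X, ν s * ENNReal.ofReal (-Real.log (ν.real s)) =
        ENNReal.ofReal (Real.negMulLog (ν.real s)) := by
      intro s
      rw [Real.negMulLog, neg_mul, ← mul_neg, ENNReal.ofReal_mul measureReal_nonneg, hreal]
    refine (ENNReal.tsum_le_tsum key).trans ?_
    rw [ENNReal.tsum_add]
    refine add_le_add ?_ ?_
    · rw [ENNReal.tsum_prod (f := fun i j => ν (a ⁻¹' {i} ∩ b ⁻¹' {j}) *
        ENNReal.ofReal (-Real.log (ν.real (a ⁻¹' {i}))))]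
      simp_rw [ENNReal.tsum_mul_right, tsum_inter_preimage ν (ha _) hb, hfin]
      exact le_rfl
    · rw [ENNReal.tsum_prod (f := fun i j => ν (a ⁻¹' {i} ∩ b ⁻¹' {j}) *
        ENNReal.ofReal (-Real.log (ν.real (b ⁻¹' {j})))), ENNReal.tsum_comm]
      simp_rw [ENNReal.tsum_mul_right]
      simp_rw [inter_comm (a ⁻¹' _)]
      simp_rw [tsum_inter_preimage ν (hb _) ha, hfin]
      exact le_rfl

lemma Hf_inj {X ι κ : Type*} [mX : MeasurableSpace X] (ν : Measure X) (a : X → ι)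
    {e : ι → κ} (he : Injective e) : Hf ν (e ∘ a) = Hf ν a := by
  unfold Hf
  rw [← he.tsum_eq]
  · congr 1; ext i; congr 3; ext1; simp [he.eq_iff]
  · intro k hk
    by_contra hne
    apply hk
    have : (e ∘ a) ⁻¹' {k} = ∅ := by
      ext x; simp; rintro rfl; exact hne ⟨_, rfl⟩
    simp [this]

/-- grouping inequality -/
lemma Hf_coarse {X ι : Type*} [Countable ι] [mX : MeasurableSpace X]
    (ν : Measure X) [IsProbabilityMeasure ν] {a : X → ι}
    (ha : ∀ i, MeasurableSet (a ⁻¹' {i})) {s : Set X} (hs : MeasurableSet s) :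
    ENNReal.ofReal (Real.negMulLog (ν.real s)) ≤
      ∑' i, ENNReal.ofReal (Real.negMulLog (ν.real (s ∩ a ⁻¹' {i}))) := by
  rw [Real.negMulLog, neg_mul, ← mul_neg, ENNReal.ofReal_mul measureReal_nonneg,
    show ENNReal.ofReal (ν.real s) = ν s by simp, ← tsum_inter_preimage ν hs ha,
    ← ENNReal.tsum_mul_right]
  refine ENNReal.tsum_le_tsum fun i => ?_
  rw [show ν (s ∩ a ⁻¹' {i}) = ENNReal.ofReal (ν.real (s ∩ a ⁻¹' {i})) by simp,
    ← ENNReal.ofReal_mul measureReal_nonneg]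
  refine ENNReal.ofReal_le_ofReal ?_
  rw [Real.negMulLog, neg_mul, ← mul_neg]
  rcases (measureReal_nonneg (μ := ν) (s := s ∩ a ⁻¹' {i})).eq_or_lt with h | h
  · rw [← h]; simp
  · have := Real.log_le_log h (measureReal_mono (μ := ν) (inter_subset_left : s ∩ a ⁻¹' {i} ⊆ s))
    exact mul_le_mul_of_nonneg_left (by linarith) h.le

/-! ### conditional versions -/


section
variable {X : Type*} (m : MeasurableSpace X) [mX : MeasurableSpace X] [StandardBorelSpace X]
  (μ : Measure X) [IsProbabilityMeasure μ]

lemma cp_ae_kernel (hm : m ≤ mX) {A : Set X} (hA : MeasurableSet A) :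
    ∀ᵐ x ∂μ, cp m μ A x = (ProbabilityTheory.condExpKernel μ m x).real A := by
  filter_upwards [ProbabilityTheory.condExpKernel_ae_eq_condExp (μ := μ) hm hA] with x hx
  exact hx.symm

lemma hd_ae_kernel (hm : m ≤ mX) {ι : Type*} [Countable ι] {a : X → ι}
    (ha : ∀ i, MeasurableSet (a ⁻¹' {i})) :
    ∀ᵐ x ∂μ, hd m μ a x = Hf (ProbabilityTheory.condExpKernel μ m x) a := by
  have h : ∀ᵐ x ∂μ, ∀ i, cp m μ (a ⁻¹' {i}) x =
      (ProbabilityTheory.condExpKernel μ m x).real (a ⁻¹' {i}) :=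
    ae_all_iff.2 fun i => cp_ae_kernel m μ hm (ha i)
  filter_upwards [h] with x hx
  unfold hd Hf
  simp_rw [hx]

lemma hd_pair (hm : m ≤ mX) {ι κ : Type*} [Countable ι] [Countable κ] {a : X → ι} {b : X → κ}
    (ha : ∀ i, MeasurableSet (a ⁻¹' {i})) (hb : ∀ i, MeasurableSet (b ⁻¹' {i})) :
    ∀ᵐ x ∂μ, hd m μ (fun x => (a x, b x)) x ≤ hd m μ a x + hd m μ b x := by
  have hpre : ∀ p : ι × κ, MeasurableSet ((fun x => (a x, b x)) ⁻¹' {p}) := by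
    intro p
    have : (fun x => (a x, b x)) ⁻¹' {p} = a ⁻¹' {p.1} ∩ b ⁻¹' {p.2} := by
      ext x; simp [Prod.ext_iff]
    rw [this]; exact (ha _).inter (hb _)
  filter_upwards [hd_ae_kernel m μ hm ha, hd_ae_kernel m μ hm hb, hd_ae_kernel m μ hm hpre]
    with x h1 h2 h3
  rw [h1, h2, h3]
  have : Nonempty X := ⟨x⟩
  exact Hf_pair _ ha hb

lemma hd_inj {ι κ : Type*} (a : X → ι)
    {e : ι → κ} (he : Injective e) (x : X) : hd m μ (e ∘ a) x = hd m μ a x := by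
  unfold hd
  rw [← he.tsum_eq]
  · congr 1; ext i; congr 3; ext1; simp [he.eq_iff]
  · intro k hk
    by_contra hne
    apply hk
    have : (e ∘ a) ⁻¹' {k} = ∅ := by
      ext x; simp; rintro rfl; exact hne ⟨_, rfl⟩
    have h0 : (fun _ : X => (0:ℝ)) = 0 := rfl
    simp [this, cp, h0]

lemma cp_mem (hm : m ≤ mX) {A : Set X} (hA : MeasurableSet A) :
    ∀ᵐ x ∂μ, cp m μ A x ∈ Icc (0 : ℝ) 1 := by
  filter_upwards [cp_ae_kernel m μ hm hA] with x hx
  have : Nonempty X := ⟨x⟩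
  rw [hx]; exact ⟨measureReal_nonneg, measureReal_le_one⟩

lemma cp_measurable' (A : Set X) : Measurable[m] (cp m μ A) :=
  stronglyMeasurable_condExp.measurable

lemma cp_measurable (hm : m ≤ mX) (A : Set X) : Measurable (cp m μ A) :=
  (cp_measurable' m μ A).mono hm le_rfl

lemma hd_measurable' {ι : Type*} [Countable ι] (a : X → ι) : Measurable[m] (hd m μ a) := by
  unfold hd
  exact @Measurable.ennreal_tsum X m ι _ _ fun i => ENNReal.measurable_ofReal.comp
    (Real.continuous_negMulLog.measurable.comp (cp_measurable' m μ _))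

lemma hd_measurable (hm : m ≤ mX) {ι : Type*} [Countable ι] (a : X → ι) :
    Measurable (hd m μ a) :=
  (hd_measurable' m μ a).mono hm le_rfl

lemma integrable_ind {A : Set X} (hA : MeasurableSet A) :
    Integrable (A.indicator (fun _ => (1 : ℝ))) μ :=
  (integrable_const 1).indicator hA

lemma setIntegral_cp (hm : m ≤ mX) {A B : Set X} (hA : MeasurableSet A)
    (hB : MeasurableSet[m] B) : ∫ x in B, cp m μ A x ∂μ = μ.real (A ∩ B) := by
  unfold cp
  rw [setIntegral_condExp hm (integrable_ind μ hA) hB, integral_indicator hA]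
  simp [Measure.restrict_restrict hA]

lemma nml_meas (hm : m ≤ mX) (A : Set X) :
    Measurable (fun x => Real.negMulLog (cp m μ A x)) :=
  Real.continuous_negMulLog.measurable.comp (cp_measurable m μ hm _)

lemma nml_mem (hm : m ≤ mX) {A : Set X} (hA : MeasurableSet A) :
    ∀ᵐ x ∂μ, 0 ≤ Real.negMulLog (cp m μ A x) ∧ Real.negMulLog (cp m μ A x) ≤ 1 := by
  filter_upwards [cp_mem m μ hm hA] with x hx
  refine ⟨Real.negMulLog_nonneg hx.1 hx.2, ?_⟩
  have := Real.negMulLog_le_one_sub_self hx.1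
  linarith [hx.1]

lemma nml_integ (hm : m ≤ mX) {A : Set X} (hA : MeasurableSet A) :
    Integrable (fun x => Real.negMulLog (cp m μ A x)) μ := by
  refine Integrable.of_bound (nml_meas m μ hm A).aestronglyMeasurable 1 ?_
  filter_upwards [nml_mem m μ hm hA] with x hx
  rw [Real.norm_eq_abs, abs_of_nonneg hx.1]; exact hx.2

end

lemma entropy_mono {X : Type*} {m₁ m₂ : MeasurableSpace X} [mX : MeasurableSpace X]
    [StandardBorelSpace X] (μ : Measure X) [IsProbabilityMeasure μ] (h12 : m₁ ≤ m₂) (hm₂ : m₂ ≤ mX)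
    {ι : Type*} [Countable ι] {a : X → ι} (ha : ∀ i, MeasurableSet (a ⁻¹' {i})) :
    ∫⁻ x, hd m₂ μ a x ∂μ ≤ ∫⁻ x, hd m₁ μ a x ∂μ := by
  have hm₁ := h12.trans hm₂
  have meas₁ := fun i => nml_meas m₁ μ hm₁ (a ⁻¹' {i})
  have meas₂ := fun i => nml_meas m₂ μ hm₂ (a ⁻¹' {i})
  have nn₁ := fun i => nml_mem m₁ μ hm₁ (ha i)
  have nn₂ := fun i => nml_mem m₂ μ hm₂ (ha i)
  have integ₁ := fun i => nml_integ m₁ μ hm₁ (ha i)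
  have integ₂ := fun i => nml_integ m₂ μ hm₂ (ha i)
  unfold hd
  rw [lintegral_tsum fun i => (meas₂ i).ennreal_ofReal.aemeasurable,
    lintegral_tsum fun i => (meas₁ i).ennreal_ofReal.aemeasurable]
  refine ENNReal.tsum_le_tsum fun i => ?_
  rw [← ofReal_integral_eq_lintegral_ofReal (integ₂ i) ((nn₂ i).mono fun _ h => h.1),
    ← ofReal_integral_eq_lintegral_ofReal (integ₁ i) ((nn₁ i).mono fun _ h => h.1)]
  refine ENNReal.ofReal_le_ofReal ?_
  have J := Real.concaveOn_negMulLog.condExp_map_le (f := cp m₂ μ (a ⁻¹' {i})) (μ := μ) hm₁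
    (Real.continuous_negMulLog.upperSemicontinuous.upperSemicontinuousOn _)
    ((cp_mem _ μ hm₂ (ha i)).mono fun x hx => hx.1) isClosed_Ici integrable_condExp (integ₂ i)
  have T : μ[cp m₂ μ (a ⁻¹' {i}) | m₁] =ᵐ[μ] cp m₁ μ (a ⁻¹' {i}) :=
    condExp_condExp_of_le h12 hm₂
  rw [← integral_condExp hm₁]
  refine integral_mono_ae integrable_condExp (integ₁ i) ?_
  filter_upwards [J, T] with x hx hT
  refine hx.trans ?_
  simp [hT]

lemma entropy_le_Hf {X : Type*} (m : MeasurableSpace X) [mX : MeasurableSpace X]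
    [StandardBorelSpace X] (μ : Measure X) [IsProbabilityMeasure μ] (hm : m ≤ mX)
    {ι : Type*} [Countable ι] {a : X → ι} (ha : ∀ i, MeasurableSet (a ⁻¹' {i})) :
    ∫⁻ x, hd m μ a x ∂μ ≤ Hf μ a := by
  refine (entropy_mono μ (bot_le : ⊥ ≤ m) hm ha).trans (le_of_eq ?_)
  have : ∀ x, hd ⊥ μ a x = Hf μ a := by
    intro x
    unfold hd Hf cp
    simp_rw [condExp_bot]
    congr 1; ext i
    have h1 : ∫ x, (a ⁻¹' {i}).indicator (fun _ => (1 : ℝ)) x ∂μ = μ.real (a ⁻¹' {i}) :=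
      integral_indicator_one (ha i)
    rw [h1]
  simp [this]

/-! ### transversals -/

lemma null_of_setIntegral_nonpos {X : Type*} [mX : MeasurableSpace X] {μ : Measure X}
    {f : X → ℝ} {B : Set X} (hB : MeasurableSet B) (hf : Integrable f μ)
    (hpos : ∀ x ∈ B, 0 < f x) (hintegral : ∫ x in B, f x ∂μ ≤ 0) : μ B = 0 := by
  by_contra hne
  have h := (setIntegral_pos_iff_support_of_nonneg_ae (μ := μ) (s := B) (f := f)
    ((ae_restrict_iff' hB).2 (.of_forall fun x hx => (hpos x hx).le)) hf.integrableOn).2 (by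
      have : support f ∩ B = B := inter_eq_right.2 fun x hx => (hpos x hx).ne'
      rw [this]; exact pos_iff_ne_zero.2 hne)
  linarith

section
variable {G X : Type*} [Group G] [Countable G] [mX : MeasurableSpace X] [MulAction G X]
  (μ : Measure X) [IsProbabilityMeasure μ]

lemma inv_mem_invSigma {W : Set X} (hW : MeasurableSet W)
    (hinv : ∀ (g : G) (x : X), g • x ∈ W ↔ x ∈ W) : MeasurableSet[invSigma G X] W := by
  refine MeasurableSpace.measurableSet_generateFrom ⟨hW, fun g => ?_⟩
  ext x; exact hinv g x

lemma invSigma_le : invSigma G X ≤ mX :=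
  MeasurableSpace.generateFrom_le fun _ h => h.1

/-- saturation -/
def sat (G : Type*) {X : Type*} [Group G] [MulAction G X] (S : Set X) : Set X :=
  {x | ∃ g : G, g • x ∈ S}

lemma sat_inv (S : Set X) (g : G) (x : X) : g • x ∈ sat G S ↔ x ∈ sat G S := by
  constructor
  · rintro ⟨h, hh⟩; exact ⟨h * g, by rwa [mul_smul]⟩
  · rintro ⟨h, hh⟩; exact ⟨h * g⁻¹, by rwa [mul_smul, inv_smul_smul]⟩

lemma subset_sat (S : Set X) : S ⊆ sat G S := fun x hx => ⟨1, by simpa using hx⟩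

lemma sat_meas (hpmp : IsPmp G μ) {S : Set X} (hS : MeasurableSet S) : MeasurableSet (sat G S) := by
  have : sat G S = ⋃ g : G, (fun x => g • x) ⁻¹' S := by ext x; simp [sat]
  rw [this]
  exact MeasurableSet.iUnion fun g => (hpmp g).measurable hS

lemma sat_mem (hpmp : IsPmp G μ) {S : Set X} (hS : MeasurableSet S) : MeasurableSet[invSigma G X] (sat G S) :=
  inv_mem_invSigma (sat_meas μ hpmp hS) (sat_inv S)

lemma transport (hpmp : IsPmp G μ) {S T : Set X} (hS : MeasurableSet S) (hT : MeasurableSet T)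
    (hone : ∀ x ∈ S, ∀ g : G, g • x ∈ S → g • x = x) (hST : S ⊆ sat G T) : μ S ≤ μ T := by
  obtain ⟨g, hg⟩ := exists_surjective_nat G
  set E : ℕ → Set X := fun n => S ∩ (fun x => g n • x) ⁻¹' T
  have hE : ∀ n, MeasurableSet (E n) := fun n => hS.inter ((hpmp (g n)).measurable hT)
  have hD : ∀ n, MeasurableSet (disjointed E n) := fun n => MeasurableSet.disjointed hE n
  have hU : ⋃ n, disjointed E n = S := by
    rw [iUnion_disjointed]
    ext x
    simp only [E, mem_iUnion, mem_inter_iff, mem_preimage]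
    refine ⟨fun ⟨_, h, _⟩ => h, fun h => ?_⟩
    obtain ⟨h', hh'⟩ := hST h
    obtain ⟨n, rfl⟩ := hg h'
    exact ⟨n, h, hh'⟩
  have hpre : ∀ n, MeasurableSet ((fun x => (g n)⁻¹ • x) ⁻¹' disjointed E n) :=
    fun n => (hpmp (g n)⁻¹).measurable (hD n)
  calc μ S = ∑' n, μ (disjointed E n) := by
        rw [← measure_iUnion (disjoint_disjointed E) hD, hU]
    _ = ∑' n, μ ((fun x => (g n)⁻¹ • x) ⁻¹' disjointed E n) := by
        congr 1; ext n
        rw [(hpmp (g n)⁻¹).measure_preimage (hD n).nullMeasurableSet]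
    _ = μ (⋃ n, (fun x => (g n)⁻¹ • x) ⁻¹' disjointed E n) := by
        rw [measure_iUnion _ hpre]
        intro i j hij
        refine Set.disjoint_left.2 fun x hx hx' => ?_
        simp only [mem_preimage] at hx hx'
        have h1 := (disjointed_subset E i hx).1
        have h2 := (disjointed_subset E j hx').1
        have h3 := hone _ h1 ((g j)⁻¹ * g i) (by simpa [mul_smul] using h2)
        simp only [mul_smul, smul_inv_smul] at h3
        rw [h3] at hx'
        exact Set.disjoint_left.1 (disjoint_disjointed E hij) hx hx'
    _ ≤ μ T := by
        refine measure_mono (iUnion_subset fun n x hx => ?_)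
        have := (disjointed_subset E n hx).2
        simpa using this
end

section
variable {G X : Type*} (m : MeasurableSpace X) [Group G] [Countable G] [mX : MeasurableSpace X]
  [StandardBorelSpace X] [MulAction G X]
  (μ : Measure X) [IsProbabilityMeasure μ]

lemma cp_transversal (hpmp : IsPmp G μ) (hm : m ≤ mX) (hI : invSigma G X ≤ m) {C A : Set X}
    (hC : MeasurableSet C) (hA : MeasurableSet A)
    (hone : ∀ x ∈ C, ∀ g : G, g • x ∈ C → g • x = x) :
    ∀ᵐ x ∂μ, 0 < cp m μ A x → cp m μ C x ≤ cp m μ A x := by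
  set B : Set X := {x | 0 < cp m μ A x ∧ cp m μ A x < cp m μ C x}
  have hB : MeasurableSet[m] B :=
    MeasurableSet.inter (measurableSet_lt measurable_const (cp_measurable' m μ A))
      (measurableSet_lt (cp_measurable' m μ A) (cp_measurable' m μ C))
  have hBX : MeasurableSet B := hm _ hB
  set W := sat G (A ∩ B)
  have hW : MeasurableSet[m] W := hI _ (sat_mem μ hpmp (hA.inter hBX))
  have hBW : MeasurableSet[m] (B ∩ W) := MeasurableSet.inter hB hW
  have h1 : μ (C ∩ (B ∩ W)) ≤ μ (A ∩ (B ∩ W)) := by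
    refine transport μ hpmp (hC.inter (hm _ hBW)) (hA.inter (hm _ hBW)) ?_ ?_
    · exact fun x hx g hg => hone x hx.1 g hg.1
    · rintro x ⟨-, -, g, hg⟩
      exact ⟨g, hg.1, hg.2, (sat_inv _ g x).2 ⟨g, hg⟩⟩
  have h2 : μ (B ∩ W) = 0 := by
    refine null_of_setIntegral_nonpos (hm _ hBW) (f := fun x => cp m μ C x - cp m μ A x)
      (integrable_condExp.sub integrable_condExp) (fun x hx => sub_pos.2 hx.1.2) ?_
    have hi : ∀ A, Integrable (cp m μ A) μ := fun _ => integrable_condExp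
    rw [integral_sub (hi C).integrableOn (hi A).integrableOn,
      setIntegral_cp m μ hm hC hBW, setIntegral_cp m μ hm hA hBW]
    have := ENNReal.toReal_mono (measure_ne_top _ _) h1
    simp only [measureReal_def]; linarith
  have h3 : μ B = 0 := by
    refine null_of_setIntegral_nonpos hBX (f := cp m μ A) integrable_condExp
      (fun x hx => hx.1) ?_
    rw [setIntegral_cp m μ hm hA hB]
    have : μ (A ∩ B) = 0 := measure_mono_null (fun x (hx : x ∈ A ∩ B) => (⟨hx.2, subset_sat (G := G) _ hx⟩ : x ∈ B ∩ W)) h2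
    simp [measureReal_def, this]
  have : ∀ᵐ x ∂μ, x ∉ B := measure_eq_zero_iff_ae_notMem.1 h3
  filter_upwards [this] with x hx h0
  by_contra h
  exact hx ⟨h0, not_le.1 h⟩

end

/-- indicator valued in the natural numbers -/
noncomputable def ind {X : Type*} (C : Set X) : X → ℕ := C.indicator (fun _ => 1)

lemma ind_pre_one {X : Type*} (C : Set X) : ind C ⁻¹' {1} = C := by
  ext x; by_cases h : x ∈ C <;> simp [ind, h]

lemma ind_pre_zero {X : Type*} (C : Set X) : ind C ⁻¹' {0} = Cᶜ := by
  ext x; by_cases h : x ∈ C <;> simp [ind, h]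

lemma ind_pre {X : Type*} (C : Set X) (n : ℕ) (hn : n ≠ 0) (hn1 : n ≠ 1) : ind C ⁻¹' {n} = ∅ := by
  ext x; by_cases h : x ∈ C <;> simp [ind, h] <;> omega

lemma ind_meas {X : Type*} [MeasurableSpace X] {C : Set X} (hC : MeasurableSet C) :
    Measurable (ind C) := measurable_const.indicator hC

lemma Hf_ind {X : Type*} [mX : MeasurableSpace X] (ν : Measure X) [IsProbabilityMeasure ν]
    {C : Set X} (hC : MeasurableSet C) :
    Hf ν (ind C) = ENNReal.ofReal (Real.binEntropy (ν.real C)) := by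
  unfold Hf
  rw [tsum_eq_sum (s := {0, 1})]
  · rw [Finset.sum_pair (by norm_num), ind_pre_one, ind_pre_zero, probReal_compl_eq_one_sub hC,
      ← ENNReal.ofReal_add, Real.binEntropy_eq_negMulLog_add_negMulLog_one_sub, add_comm]
    · exact Real.negMulLog_nonneg (by linarith [measureReal_le_one (μ := ν) (s := C)])
        (by linarith [measureReal_nonneg (μ := ν) (s := C)])
    · exact Real.negMulLog_nonneg measureReal_nonneg measureReal_le_one
  · intro n hn
    simp at hn
    rw [ind_pre C n hn.1 hn.2]; simp

lemma binEntropy_le {t s : ℝ} (h0 : 0 ≤ t) (h1 : t ≤ s) (h2 : t ≤ 1 - s) :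
    Real.binEntropy t ≤ Real.binEntropy s := by
  have ht : t ∈ Icc (0:ℝ) 2⁻¹ := ⟨h0, by linarith⟩
  rcases le_total s 2⁻¹ with h | h
  · exact Real.binEntropy_strictMonoOn.monotoneOn ht ⟨by linarith, h⟩ h1
  · rw [← Real.binEntropy_one_sub s]
    exact Real.binEntropy_strictMonoOn.monotoneOn ht ⟨by linarith, by linarith⟩ h2

lemma Hf_ind_le {X ι : Type*} [Countable ι] [mX : MeasurableSpace X] (ν : Measure X)
    [IsProbabilityMeasure ν] {a : X → ι}
    (ha : ∀ i, MeasurableSet (a ⁻¹' {i})) (i : ι) :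
    ENNReal.ofReal (Real.binEntropy (ν.real (a ⁻¹' {i}))) ≤ Hf ν a := by
  classical
  rw [Real.binEntropy_eq_negMulLog_add_negMulLog_one_sub, ← probReal_compl_eq_one_sub (ha i)]
  unfold Hf
  rw [ENNReal.tsum_eq_add_tsum_ite i]
  refine ENNReal.ofReal_add_le.trans ?_
  gcongr
  refine (Hf_coarse ν ha (ha i).compl).trans (ENNReal.tsum_le_tsum fun k => ?_)
  split_ifs with h
  · subst h; simp
  · have : (a ⁻¹' {i})ᶜ ∩ a ⁻¹' {k} = a ⁻¹' {k} := by
      refine inter_eq_right.2 fun x hx => ?_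
      simp only [mem_preimage, mem_singleton_iff, mem_compl_iff] at hx ⊢
      rw [hx]; exact h
    rw [this]

section
variable {G X : Type*} (m : MeasurableSpace X) [Group G] [Countable G] [mX : MeasurableSpace X]
  [StandardBorelSpace X] [MulAction G X]
  (μ : Measure X) [IsProbabilityMeasure μ]

lemma hd_transversal (hpmp : IsPmp G μ) (hm : m ≤ mX) (hI : invSigma G X ≤ m) {C : Set X}
    (hC : MeasurableSet C) {a : X → ℕ} (ha : Measurable a)
    (hone : ∀ x ∈ C, ∀ g : G, g • x ∈ C → g • x = x)
    (hCN : ∀ x ∈ C, hd m μ a x ≠ 0) :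
    ∀ᵐ x ∂μ, hd m μ (ind C) x ≤ hd m μ a x := by
  have ha' : ∀ i, MeasurableSet (a ⁻¹' {i}) := fun i => ha (measurableSet_singleton i)
  have hc' : ∀ i, MeasurableSet (ind C ⁻¹' {i}) := fun i => ind_meas hC (measurableSet_singleton i)
  have hN : ∀ᵐ x ∂μ, 0 < cp m μ C x → hd m μ a x ≠ 0 := by
    set B : Set X := {x | 0 < cp m μ C x} ∩ {x | hd m μ a x = 0}
    have hB : MeasurableSet[m] B :=
      MeasurableSet.inter (measurableSet_lt measurable_const (cp_measurable' m μ C))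
        (hd_measurable' m μ a (measurableSet_singleton 0))
    have : μ B = 0 := by
      refine null_of_setIntegral_nonpos (hm _ hB) (f := cp m μ C) integrable_condExp
        (fun x hx => hx.1) ?_
      rw [setIntegral_cp m μ hm hC hB]
      have : C ∩ B = ∅ := by
        ext x; simp only [mem_inter_iff, mem_empty_iff_false, iff_false]
        rintro ⟨h1, h2⟩; exact hCN x h1 h2.2
      simp [this]
    filter_upwards [measure_eq_zero_iff_ae_notMem.1 this] with x hx h0 h1
    exact hx ⟨h0, h1⟩
  have hT : ∀ᵐ x ∂μ, ∀ i, 0 < cp m μ (a ⁻¹' {i}) x → cp m μ C x ≤ cp m μ (a ⁻¹' {i}) x :=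
    ae_all_iff.2 fun i => cp_transversal m μ hpmp hm hI hC (ha' i) hone
  have hT' : ∀ᵐ x ∂μ, ∀ i, 0 < cp m μ (a ⁻¹' {i})ᶜ x → cp m μ C x ≤ cp m μ (a ⁻¹' {i})ᶜ x :=
    ae_all_iff.2 fun i => cp_transversal m μ hpmp hm hI hC (ha' i).compl hone
  have k1 : ∀ᵐ x ∂μ, ∀ i, cp m μ (a ⁻¹' {i}) x =
      (ProbabilityTheory.condExpKernel μ m x).real (a ⁻¹' {i}) :=
    ae_all_iff.2 fun i => cp_ae_kernel m μ hm (ha' i)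
  have k2 : ∀ᵐ x ∂μ, ∀ i, cp m μ (a ⁻¹' {i})ᶜ x =
      (ProbabilityTheory.condExpKernel μ m x).real (a ⁻¹' {i})ᶜ :=
    ae_all_iff.2 fun i => cp_ae_kernel m μ hm (ha' i).compl
  filter_upwards [hN, hT, hT', k1, k2, cp_ae_kernel m μ hm hC, hd_ae_kernel m μ hm ha',
    hd_ae_kernel m μ hm hc'] with x hN hT hT' k1 k2 k3 k4 k5
  have : Nonempty X := ⟨x⟩
  rw [k5, Hf_ind _ hC]
  rcases (measureReal_nonneg (μ := ProbabilityTheory.condExpKernel μ m x) (s := C)).eq_or_lt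
    with h | h
  · rw [← h]; simp
  · have h1 := hN (by rw [k3]; exact h)
    have : ∃ i, Real.negMulLog ((ProbabilityTheory.condExpKernel μ m x).real (a ⁻¹' {i})) ≠ 0 := by
      by_contra hcon
      push Not at hcon
      apply h1
      rw [k4, Hf]; simp [hcon]
    obtain ⟨i, hi⟩ := this
    rw [k4]
    refine le_trans (ENNReal.ofReal_le_ofReal ?_) (Hf_ind_le _ ha' i)
    have i0 : 0 < (ProbabilityTheory.condExpKernel μ m x).real (a ⁻¹' {i}) := by
      refine lt_of_le_of_ne measureReal_nonneg fun h => hi ?_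
      rw [← h]; simp
    have i1 : (ProbabilityTheory.condExpKernel μ m x).real (a ⁻¹' {i}) < 1 := by
      refine lt_of_le_of_ne measureReal_le_one fun h => hi ?_
      rw [h]; simp
    have j0 := hT i (by rw [k1]; exact i0)
    have j1 := hT' i (by rw [k2, probReal_compl_eq_one_sub (ha' i)]; linarith)
    rw [k2, probReal_compl_eq_one_sub (ha' i), k3] at j1
    rw [k1, k3] at j0
    exact binEntropy_le h.le j0 j1

end

/-! ### coding -/

lemma Hf_comp_le {X ι κ : Type*} [Countable ι] [mX : MeasurableSpace X]
    (ν : Measure X) [IsProbabilityMeasure ν] {a : X → ι} (ha : ∀ i, MeasurableSet (a ⁻¹' {i}))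
    (e : ι → κ) : Hf ν (e ∘ a) ≤ Hf ν a := by
  classical
  have hs : ∀ k, MeasurableSet ((e ∘ a) ⁻¹' {k}) := fun k => by
    have : (e ∘ a) ⁻¹' {k} = ⋃ i ∈ {i | e i = k}, a ⁻¹' {i} := by ext x; simp
    rw [this]
    exact MeasurableSet.biUnion (to_countable _) fun i _ => ha i
  calc Hf ν (e ∘ a) ≤ ∑' k, ∑' i, ENNReal.ofReal
        (Real.negMulLog (ν.real ((e ∘ a) ⁻¹' {k} ∩ a ⁻¹' {i}))) :=
        ENNReal.tsum_le_tsum fun k => Hf_coarse ν ha (hs k)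
    _ = ∑' i, ∑' k, ENNReal.ofReal
        (Real.negMulLog (ν.real ((e ∘ a) ⁻¹' {k} ∩ a ⁻¹' {i}))) := ENNReal.tsum_comm
    _ = Hf ν a := by
        unfold Hf
        congr 1; ext i
        rw [tsum_eq_single (e i)]
        · have : (e ∘ a) ⁻¹' {e i} ∩ a ⁻¹' {i} = a ⁻¹' {i} := by
            refine inter_eq_right.2 fun x hx => ?_
            simp at hx ⊢; rw [hx]
          rw [this]
        · intro k hk
          have : (e ∘ a) ⁻¹' {k} ∩ a ⁻¹' {i} = ∅ := by
            ext x; simp; rintro h rfl; exact hk h.symm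
          simp [this]

lemma pre_pair_meas {X ι κ : Type*} [mX : MeasurableSpace X] {a : X → ι} {b : X → κ}
    (ha : ∀ i, MeasurableSet (a ⁻¹' {i})) (hb : ∀ i, MeasurableSet (b ⁻¹' {i})) :
    ∀ i, MeasurableSet ((fun x => (a x, b x)) ⁻¹' {i}) := by
  rintro ⟨i, j⟩
  have : ((fun x => (a x, b x)) ⁻¹' {(i, j)}) = a ⁻¹' {i} ∩ b ⁻¹' {j} := by
    ext x; simp
  rw [this]; exact (ha i).inter (hb j)

lemma pre_pi_meas {X J κ : Type*} [Countable J] [mX : MeasurableSpace X] {R : J → X → κ}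
    (hR : ∀ j i, MeasurableSet (R j ⁻¹' {i})) :
    ∀ i, MeasurableSet ((fun x j => R j x) ⁻¹' {i}) := by
  intro i
  have : ((fun x j => R j x) ⁻¹' {i}) = ⋂ j, R j ⁻¹' {i j} := by
    ext x; simp [funext_iff]
  rw [this]; exact MeasurableSet.iInter fun j => hR j _

lemma Hf_const {X κ : Type*} [mX : MeasurableSpace X]
    (ν : Measure X) [IsProbabilityMeasure ν] (k : κ) : Hf ν (fun _ : X => k) = 0 := by
  unfold Hf
  rw [ENNReal.tsum_eq_zero]
  intro i
  by_cases h : k = i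
  · subst h; simp
  · simp [preimage_const_of_notMem, h]

lemma Hf_pi {X J κ : Type*} [Fintype J] [Countable κ] [mX : MeasurableSpace X]
    (ν : Measure X) [IsProbabilityMeasure ν] {R : J → X → κ} (k0 : κ)
    (hR : ∀ j i, MeasurableSet (R j ⁻¹' {i})) :
    Hf ν (fun x j => R j x) ≤ ∑ j, Hf ν (R j) := by
  classical
  have key : ∀ s : Finset J, Hf ν (fun x j => if j ∈ s then R j x else k0) ≤ ∑ j ∈ s, Hf ν (R j) := by
    intro s
    induction s using Finset.induction_on with
    | empty => simp [Hf_const]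
    | insert i s hi ih =>
      rw [Finset.sum_insert hi]
      have hm : ∀ f, MeasurableSet ((fun x j => if j ∈ s then R j x else k0) ⁻¹' {f}) := by
        refine pre_pi_meas (R := fun j x => if j ∈ s then R j x else k0) fun j f => ?_
        by_cases h : j ∈ s
        · simpa [h] using hR j f
        · simp only [h, if_false]
          by_cases hf : k0 = f
          · simp [preimage_const_of_mem, hf]
          · simp [preimage_const_of_notMem, hf]
      have h1 := Hf_comp_le ν (pre_pair_meas (hR i) hm)
        (fun y j => if j = i then y.1 else y.2 j)
      refine le_trans (le_of_eq ?_) (h1.trans ((Hf_pair ν (hR i) hm).trans (by gcongr)))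
      congr 1
      funext x j
      by_cases h : j = i
      · subst h; simp
      · simp [h]
  simpa using key Finset.univ

lemma small_ent (k : ℕ) {ε : ℝ} (hε : 0 < ε) : ∃ δ > 0, ∀ {X : Type*} [mX : MeasurableSpace X]
    (ν : Measure X) [IsProbabilityMeasure ν] (t : X → ℕ), Measurable t → (∀ x, t x ≤ k) →
    ν.real {x | t x ≠ 0} ≤ δ → Hf ν t ≤ ENNReal.ofReal ε := by
  set e := ε / (k + 1) with he
  have he0 : 0 < e := by positivity
  have c0 : Filter.Tendsto Real.negMulLog (nhds 0) (nhds 0) := by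
    simpa using Real.continuous_negMulLog.tendsto 0
  have c1 : Filter.Tendsto (fun u : ℝ => Real.negMulLog (1 - u)) (nhds 0) (nhds 0) := by
    have : Continuous (fun u : ℝ => Real.negMulLog (1 - u)) :=
      Real.continuous_negMulLog.comp (by fun_prop)
    simpa using this.tendsto 0
  have := (c0.eventually (gt_mem_nhds he0)).and (c1.eventually (gt_mem_nhds he0))
  obtain ⟨δ, hδ, h⟩ := Metric.eventually_nhds_iff.1 this
  refine ⟨δ / 2, by positivity, ?_⟩
  intro X mX ν _ t ht htk hsm
  have hb : ∀ u : ℝ, 0 ≤ u → u ≤ δ / 2 → Real.negMulLog u < e ∧ Real.negMulLog (1 - u) < e := by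
    intro u h0 h1
    refine h ?_
    rw [Real.dist_eq, sub_zero, abs_of_nonneg h0]; linarith
  unfold Hf
  rw [tsum_eq_sum (s := Finset.range (k + 1))]
  · calc _ ≤ ∑ i ∈ Finset.range (k + 1), ENNReal.ofReal e := by
          refine Finset.sum_le_sum fun i _ => ENNReal.ofReal_le_ofReal ?_
          by_cases hi : i = 0
          · subst hi
            have : t ⁻¹' {0} = {x | t x ≠ 0}ᶜ := by ext x; simp
            rw [this, probReal_compl_eq_one_sub]
            · exact (hb _ measureReal_nonneg hsm).2.le
            · exact (ht (measurableSet_singleton 0)).compl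
          · refine (hb _ measureReal_nonneg (le_trans (measureReal_mono ?_) hsm)).1.le
            intro x hx; simp at hx ⊢; omega
      _ = _ := by
          rw [Finset.sum_const, Finset.card_range, nsmul_eq_mul, ← ENNReal.ofReal_natCast,
            ← ENNReal.ofReal_mul (by positivity)]
          congr 1; rw [he]; push_cast; field_simp
  · intro i hi
    have : t ⁻¹' {i} = ∅ := by
      ext x; simp; intro h; have := htk x; simp at hi; omega
    simp [this]

/-- weights on lists -/
noncomputable def lw {A : Type*} (κ : A → ℝ) (l : List A) : ℝ := (l.map κ).prod

lemma lw_pos {A : Type*} {κ : A → ℝ} (hκ : ∀ a, 0 < κ a) (l : List A) : 0 < lw κ l := by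
  induction l with
  | nil => simp [lw]
  | cons a l ih => simpa [lw] using mul_pos (hκ a) ih

lemma lw_le {A : Type*} {κ : A → ℝ} (hκ : ∀ a, 0 < κ a) (h1 : ∀ a, κ a ≤ 1) (l : List A) :
    lw κ l ≤ 1 := by
  induction l with
  | nil => simp [lw]
  | cons a l ih =>
    simp only [lw, List.map_cons, List.prod_cons] at ih ⊢
    exact mul_le_one₀ (h1 a) (lw_pos hκ l).le ih

lemma lw_log {A : Type*} {κ : A → ℝ} (hκ : ∀ a, 0 < κ a) (h1 : ∀ a, κ a ≤ 1) (l : List A) :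
    ENNReal.ofReal (-Real.log (lw κ l)) = (l.map fun a => ENNReal.ofReal (-Real.log (κ a))).sum := by
  induction l with
  | nil => simp [lw]
  | cons a l ih =>
    have : lw κ (a :: l) = κ a * lw κ l := by simp [lw]
    rw [this, Real.log_mul (hκ a).ne' (lw_pos hκ l).ne', neg_add, ENNReal.ofReal_add, ih]
    · simp
    · have := Real.log_nonpos (hκ a).le (h1 a); linarith
    · have := Real.log_nonpos (lw_pos hκ l).le (lw_le hκ h1 l); linarith

lemma lw_sum {A : Type*} [Fintype A] {κ : A → ℝ} (hκ : ∀ a, 0 < κ a) :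
    ∑' l : List A, ENNReal.ofReal (lw κ l) = (1 - ENNReal.ofReal (∑ a, κ a))⁻¹ := by
  have hk : ∀ n, ∑' f : Fin n → A, ENNReal.ofReal (lw κ (List.ofFn f)) =
      (ENNReal.ofReal (∑ a, κ a)) ^ n := by
    intro n
    rw [tsum_fintype, ENNReal.ofReal_sum_of_nonneg fun a _ => (hκ a).le, ← Fin.prod_const n,
      Finset.prod_univ_sum]
    rw [Fintype.piFinset_univ]
    refine Finset.sum_congr rfl fun f _ => ?_
    rw [← ENNReal.ofReal_prod_of_nonneg fun i _ => (hκ (f i)).le]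
    simp [lw, List.map_ofFn, List.prod_ofFn]
  rw [← (List.equivSigmaTuple (α := A)).symm.tsum_eq, ENNReal.tsum_sigma', ← ENNReal.tsum_geometric]
  congr 1; ext n
  rw [← hk n]; rfl

lemma list_gibbs {X A : Type*} [Fintype A] [mX : MeasurableSpace X] (ν : Measure X)
    [IsProbabilityMeasure ν] {κ : A → ℝ} (hκ : ∀ a, 0 < κ a) {s η : ℝ} (hs : ∑ a, κ a ≤ s)
    (hs1 : s < 1) (hη : 0 < η) (hη1 : η < 1) {R : X → List A}
    (hR : ∀ l, MeasurableSet (R ⁻¹' {l})) {C : Set X} (hC : MeasurableSet C)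
    (hRC : ∀ x, x ∉ C → R x = []) :
    Hf ν R ≤ ENNReal.ofReal (-Real.log (1 - η)) + ENNReal.ofReal (-Real.log (η * (1 - s))) * ν C
      + ∫⁻ x, ((R x).map fun a => ENNReal.ofReal (-Real.log (κ a))).sum ∂ν := by
  classical
  have hs0 : 0 ≤ s := (Finset.sum_nonneg fun a _ => (hκ a).le).trans hs
  have h1 : ∀ a, κ a ≤ 1 := fun a =>
    ((Finset.single_le_sum (fun b _ => (hκ b).le) (Finset.mem_univ a)).trans hs).trans hs1.le
  set w : List A → ℝ := fun l => if l = [] then 1 - η else η * (1 - s) with hw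
  have hηs : 0 < η * (1 - s) := mul_pos hη (by linarith)
  have hηs1 : η * (1 - s) ≤ 1 := mul_le_one₀ hη1.le (by linarith) (by linarith)
  have hw0 : ∀ l, 0 < w l := by
    intro l; simp only [hw]; split_ifs <;> [linarith; exact hηs]
  have hw1 : ∀ l, w l ≤ 1 := by
    intro l; simp only [hw]; split_ifs <;> [linarith; exact hηs1]
  set q : List A → ℝ := fun l => w l * lw κ l with hq
  have hq0 : ∀ l, 0 < q l := fun l => mul_pos (hw0 l) (lw_pos hκ l)
  have hqs : ∑' l, ENNReal.ofReal (q l) ≤ 1 := by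
    calc ∑' l, ENNReal.ofReal (q l)
        ≤ ∑' l : List A, ((if l = [] then ENNReal.ofReal (1 - η) else 0) +
          ENNReal.ofReal (η * (1 - s)) * ENNReal.ofReal (lw κ l)) := by
          refine ENNReal.tsum_le_tsum fun l => ?_
          by_cases h : l = []
          · subst h; simp [hq, hw, lw]
          · simp only [hq, hw, h, if_false, zero_add]
            rw [ENNReal.ofReal_mul hηs.le]
      _ = ENNReal.ofReal (1 - η) + ENNReal.ofReal (η * (1 - s)) *
            (1 - ENNReal.ofReal (∑ a, κ a))⁻¹ := by
          rw [ENNReal.tsum_add, tsum_ite_eq, ENNReal.tsum_mul_left, lw_sum hκ]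
      _ ≤ ENNReal.ofReal (1 - η) + ENNReal.ofReal η := by
          gcongr
          have h2 : ENNReal.ofReal (1 - s) ≤ 1 - ENNReal.ofReal (∑ a, κ a) := by
            rw [ENNReal.ofReal_sub _ hs0, ENNReal.ofReal_one]
            exact tsub_le_tsub_left (ENNReal.ofReal_le_ofReal hs) _
          calc _ ≤ ENNReal.ofReal (η * (1 - s)) * (ENNReal.ofReal (1 - s))⁻¹ := by gcongr
            _ = ENNReal.ofReal η := by
              rw [ENNReal.ofReal_mul hη.le, mul_assoc, ENNReal.mul_inv_cancel, mul_one]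
              · simpa using hs1
              · exact ENNReal.ofReal_ne_top
      _ = 1 := by
          rw [← ENNReal.ofReal_add (by linarith) hη.le]; simp
  have hq1 : ∀ l, q l ≤ 1 := fun l => mul_le_one₀ (hw1 l) (lw_pos hκ l).le (lw_le hκ h1 l)
  have hts : ∑' l, ENNReal.ofReal (ν.real (R ⁻¹' {l})) = 1 := by
    have := tsum_preimage ν hR
    rw [← measure_univ (μ := ν), ← this]
    congr 1; ext l
    exact ofReal_measureReal (measure_ne_top _ _)
  refine (gibbs (fun l => ν.real (R ⁻¹' {l})) q (fun _ => measureReal_nonneg)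
    (fun _ => measureReal_le_one) (fun l => (hq0 l).le) hq1 (fun l h => absurd h (hq0 l).ne')
    hqs hts).trans ?_
  have e1 : ∑' l, ENNReal.ofReal (ν.real (R ⁻¹' {l}) * -Real.log (q l)) =
      ∫⁻ x, ENNReal.ofReal (-Real.log (q (R x))) ∂ν := by
    let _ : MeasurableSpace (List A) := ⊤
    have hRm : Measurable R := measurable_to_countable' hR
    have := lintegral_map (μ := ν) (f := fun l => ENNReal.ofReal (-Real.log (q l)))
      (measurable_from_top) hRm
    rw [← this, lintegral_countable']
    congr 1; ext l
    rw [Measure.map_apply hRm (MeasurableSpace.measurableSet_top), ENNReal.ofReal_mul measureReal_nonneg,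
      ofReal_measureReal, mul_comm]
  rw [e1]
  have e2 : ∀ x, ENNReal.ofReal (-Real.log (q (R x))) ≤ ENNReal.ofReal (-Real.log (1 - η)) +
      C.indicator (fun _ => ENNReal.ofReal (-Real.log (η * (1 - s)))) x +
      ((R x).map fun a => ENNReal.ofReal (-Real.log (κ a))).sum := by
    intro x
    rw [← lw_log hκ h1, hq]
    simp only
    rw [Real.log_mul (hw0 _).ne' (lw_pos hκ _).ne', neg_add]
    refine ENNReal.ofReal_add_le.trans ?_
    gcongr
    by_cases hx : R x = []
    · simp [hw, hx]
    · have : x ∈ C := by by_contra h; exact hx (hRC x h)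
      simp [hw, hx, this]
  refine (lintegral_mono e2).trans ?_
  rw [lintegral_add_left, lintegral_add_left, lintegral_indicator hC]
  · simp
  · exact measurable_const
  · exact (measurable_const.indicator hC).const_add _

lemma filterMap_sum {A : Type*} (L : A → ℝ≥0∞) (v : ℕ → Option A) (M : ℕ) :
    (((List.range M).filterMap v).map L).sum =
      ∑ n ∈ Finset.range M, (v n).elim 0 L := by
  induction M with
  | zero => simp
  | succ M ih =>
    rw [List.range_succ, List.filterMap_append, List.map_append, List.sum_append, ih,
      Finset.sum_range_succ]
    congr 1
    cases h : v M <;> simp [h]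

lemma coding {G X A : Type*} [Group G] [mX : MeasurableSpace X] [MulAction G X] [Fintype A]
    (μ : Measure X) [IsProbabilityMeasure μ] (hpmp : IsPmp G μ)
    {κ : A → ℝ} (hκ : ∀ a, 0 < κ a) (hκ1 : ∑ a, κ a ≤ 1) {s η : ℝ} (hs : 0 < s)
    (hs1 : s < 1) (hη : 0 < η) (hη1 : η < 1) (g : ℕ → G) (B : ℕ → Set X)
    (hB : ∀ n, MeasurableSet (B n)) (hBd : Pairwise (Function.onFun Disjoint B))
    (D : Set X) (hBD : ∀ n, B n ⊆ D) (p : X → A) (hp : ∀ a, MeasurableSet (p ⁻¹' {a}))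
    {C : Set X} (hC : MeasurableSet C) (hBC : ∀ n, ∀ x ∈ B n, g n • x ∈ C)
    (v : ℕ → X → Option A) (hv1 : ∀ n x, x ∈ B n → v n (g n • x) = some (p x))
    (hv0 : ∀ n x, x ∉ B n → v n (g n • x) = none) (M : ℕ) :
    (∀ l, MeasurableSet ((fun x => (List.range M).filterMap (v · x)) ⁻¹' {l})) ∧
    Hf μ (fun x => (List.range M).filterMap (v · x)) ≤
      ENNReal.ofReal (-Real.log (1 - η)) + ENNReal.ofReal (-Real.log (η * (1 - s))) * μ C
      + ∫⁻ x in D, (ENNReal.ofReal (-Real.log s) + ENNReal.ofReal (-Real.log (κ (p x)))) ∂μ := by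
  classical
  have hpm : @Measurable X A _ ⊤ p := by
    let _ : MeasurableSpace A := ⊤
    exact measurable_to_countable' hp
  have hv : ∀ n o, MeasurableSet (v n ⁻¹' {o}) := by
    intro n o
    have : MeasurableSet ((fun x => v n (g n • x)) ⁻¹' {o}) := by
      cases o with
      | none =>
        have : (fun x => v n (g n • x)) ⁻¹' {none} = (B n)ᶜ := by
          ext x
          by_cases hx : x ∈ B n
          · simp [hv1 n x hx, hx]
          · simp [hv0 n x hx, hx]
        rw [this]; exact (hB n).compl
      | some a =>
        have : (fun x => v n (g n • x)) ⁻¹' {some a} = B n ∩ p ⁻¹' {a} := by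
          ext x
          by_cases hx : x ∈ B n
          · simp [hv1 n x hx, hx]
          · simp [hv0 n x hx, hx]
        rw [this]; exact (hB n).inter (hp a)
    have h2 := (hpmp (g n)⁻¹).measurable this
    convert h2 using 1
    ext x; simp
  have hR : ∀ l, MeasurableSet ((fun x => (List.range M).filterMap (v · x)) ⁻¹' {l}) := by
    induction M with
    | zero => intro l; simp only [List.range_zero, List.filterMap_nil]
              by_cases hf : ([] : List A) = l
              · simp [preimage_const_of_mem, hf]
              · simp [preimage_const_of_notMem, hf]
    | succ M ih =>
      intro l
      have h := pre_pair_meas ih (hv M)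
      have : ((fun x => (List.range (M + 1)).filterMap (v · x)) ⁻¹' {l}) =
        ⋃ y ∈ {y : List A × Option A | y.1 ++ y.2.toList = l},
          (fun x => ((List.range M).filterMap (v · x), v M x)) ⁻¹' {y} := by
        ext x
        simp only [List.range_succ, List.filterMap_append, mem_preimage, mem_singleton_iff,
          mem_setOf_eq, mem_iUnion, exists_prop]
        constructor
        · intro hx
          refine ⟨_, ?_, rfl⟩
          rw [← hx]
          cases h : v M x <;> simp [h]
        · rintro ⟨y, hy, rfl⟩
          rw [← hy]
          cases h : v M x <;> simp [h]
      rw [this]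
      exact MeasurableSet.biUnion (to_countable _) fun i _ => h i
  refine ⟨hR, ?_⟩
  have hRC : ∀ x, x ∉ C → (List.range M).filterMap (v · x) = [] := by
    intro x hx
    rw [List.filterMap_eq_nil_iff]
    intro n _
    have := hv0 n ((g n)⁻¹ • x) (fun h => hx (by simpa using hBC n _ h))
    simpa using this
  have hκs : ∀ a, 0 < s * κ a := fun a => mul_pos hs (hκ a)
  have hκl : ∀ a, κ a ≤ 1 := fun a =>
    (Finset.single_le_sum (fun b _ => (hκ b).le) (Finset.mem_univ a)).trans hκ1
  refine (list_gibbs μ hκs (s := s) (by rw [← Finset.mul_sum]; nlinarith) hs1 hη hη1 hR hC hRC).trans ?_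
  refine add_le_add le_rfl ?_
  set L : A → ℝ≥0∞ := fun a => ENNReal.ofReal (-Real.log (s * κ a)) with hL
  have hLm : Measurable (fun x => L (p x)) := by
    let _ : MeasurableSpace A := ⊤
    exact (measurable_from_top (f := L)).comp hpm
  have hfm : ∀ x, (((List.range M).filterMap (v · x)).map L).sum =
      ∑ n ∈ Finset.range M, (v n x).elim 0 L := fun x => filterMap_sum L (v · x) M
  rw [lintegral_congr hfm]
  have hel : ∀ n x, (v n x).elim 0 L = (B n).indicator (fun y => L (p y)) ((g n)⁻¹ • x) := by
    intro n x
    by_cases h : (g n)⁻¹ • x ∈ B n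
    · have := hv1 n _ h
      rw [smul_inv_smul] at this
      simp [this, h]
    · have := hv0 n _ h
      rw [smul_inv_smul] at this
      simp [this, h]
  have him : ∀ n, Measurable ((B n).indicator (fun y => L (p y))) := fun n => hLm.indicator (hB n)
  have hintegral : ∀ n, ∫⁻ x, (v n x).elim 0 L ∂μ = ∫⁻ x in B n, L (p x) ∂μ := by
    intro n
    simp only [hel]
    rw [(hpmp (g n)⁻¹).lintegral_comp (him n), lintegral_indicator (hB n)]
  rw [lintegral_finsetSum']
  · simp only [hintegral]
    calc ∑ n ∈ Finset.range M, ∫⁻ x in B n, L (p x) ∂μ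
        ≤ ∑' n, ∫⁻ x in B n, L (p x) ∂μ := ENNReal.sum_le_tsum _
      _ = ∫⁻ x in ⋃ n, B n, L (p x) ∂μ := (lintegral_iUnion hB hBd _).symm
      _ ≤ ∫⁻ x in D, L (p x) ∂μ := lintegral_mono_set (iUnion_subset hBD)
      _ ≤ _ := by
          refine lintegral_mono fun x => ?_
          simp only [hL]
          rw [Real.log_mul hs.ne' (hκ _).ne', neg_add]
          exact ENNReal.ofReal_add_le
  · intro n _
    simp only [hel]
    exact ((him n).comp (hpmp (g n)⁻¹).measurable).aemeasurable

/-! ### markers -/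

lemma markers {G X : Type*} [Group G] [Countable G] [mX : MeasurableSpace X]
    [StandardBorelSpace X] [MulAction G X] (μ : Measure X) [IsProbabilityMeasure μ]
    (hpmp : IsPmp G μ) {N : Set X} (hN : MeasurableSet N) :
    ∃ (C : Set X) (D : ℕ → Set X), MeasurableSet C ∧ (∀ n, MeasurableSet (D n)) ∧ C ⊆ N ∧
      (∀ x ∈ C, ∀ g : G, g • x ∈ C → g • x = x) ∧
      (∀ x ∈ sat G N, x ∉ sat G C → ∀ n, x ∈ sat G (D n)) ∧
      Filter.Tendsto (fun n => μ (D n)) Filter.atTop (nhds 0) := by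
  classical
  set f : X → ℝ≥0∞ := fun x => ENNReal.ofReal (Real.exp (embeddingReal X x)) with hf
  have hfm : Measurable f := by
    have := (measurableEmbedding_embeddingReal X).measurable
    exact ENNReal.measurable_ofReal.comp (Real.measurable_exp.comp this)
  have hfi : Injective f := by
    intro x y h
    simp only [hf] at h
    rw [ENNReal.ofReal_eq_ofReal_iff (Real.exp_pos _).le (Real.exp_pos _).le] at h
    exact (measurableEmbedding_embeddingReal X).injective (Real.exp_injective h)
  have hft : ∀ x, f x < ⊤ := fun x => ENNReal.ofReal_lt_top
  set s : X → ℝ≥0∞ := fun x => ⨅ g : G, if g • x ∈ N then f (g • x) else ⊤ with hs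
  have hsm : Measurable s := by
    refine Measurable.iInf fun g => Measurable.ite ((hpmp g).measurable hN)
      (hfm.comp (hpmp g).measurable) measurable_const
  have hsi : ∀ (h : G) x, s (h • x) = s x := by
    intro h x
    simp only [hs, ← mul_smul]
    exact (Equiv.mulRight h).iInf_congr fun g => rfl
  refine ⟨{x ∈ N | f x = s x}, fun n => {x ∈ N | s x < f x ∧ f x < s x + (n + 1 : ℝ≥0∞)⁻¹},
    ?_, ?_, ?_, ?_, ?_, ?_⟩
  · exact hN.inter (measurableSet_eq_fun hfm hsm)
  · intro n
    exact hN.inter ((measurableSet_lt hsm hfm).inter (measurableSet_lt hfm (hsm.add_const _)))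
  · exact fun x hx => hx.1
  · intro x hx g hg
    refine hfi ?_
    rw [hg.2, hx.2, hsi]
  · intro x ⟨g0, hg0⟩ hxC n
    have hst : s x ≠ ⊤ := by
      refine ne_of_lt (lt_of_le_of_lt (iInf_le _ g0) ?_)
      simp only [hg0, if_true]; exact hft _
    have : s x < s x + (n + 1 : ℝ≥0∞)⁻¹ := ENNReal.lt_add_right hst (by simp)
    obtain ⟨g, hg⟩ := iInf_lt_iff.1 this
    by_cases hgN : g • x ∈ N
    · simp only [hgN, if_true] at hg
      refine ⟨g, hgN, ?_, ?_⟩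
      · rw [hsi]
        have h1 : s x ≤ f (g • x) := by
          refine (iInf_le _ g).trans ?_
          simp [hgN]
        refine lt_of_le_of_ne h1 fun h => hxC ⟨g, hgN, ?_⟩
        rw [hsi, h]
      · rw [hsi]; exact hg
    · simp [hgN] at hg
  · have hD : ∀ n : ℕ, MeasurableSet {x ∈ N | s x < f x ∧ f x < s x + (n + 1 : ℝ≥0∞)⁻¹} := by
      intro n
      exact hN.inter ((measurableSet_lt hsm hfm).inter (measurableSet_lt hfm (hsm.add_const _)))
    have hanti : Antitone (fun n : ℕ => {x ∈ N | s x < f x ∧ f x < s x + (n + 1 : ℝ≥0∞)⁻¹}) := by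
      intro n k hnk x hx
      refine ⟨hx.1, hx.2.1, hx.2.2.trans_le ?_⟩
      gcongr
    have hemp : ⋂ n : ℕ, {x ∈ N | s x < f x ∧ f x < s x + (n + 1 : ℝ≥0∞)⁻¹} = ∅ := by
      ext x
      simp only [mem_iInter, mem_setOf_eq, mem_empty_iff_false, iff_false, not_forall]
      by_contra hcon
      push Not at hcon
      have h1 := (hcon 0).2.1
      obtain ⟨n, hn⟩ := ENNReal.exists_inv_nat_lt (a := f x - s x) (by
        rw [ne_eq, tsub_eq_zero_iff_le, not_le]; exact h1)
      have h2 := (hcon n).2.2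
      have h3 : s x + (n + 1 : ℝ≥0∞)⁻¹ ≤ f x := by
        calc s x + (n + 1 : ℝ≥0∞)⁻¹ ≤ s x + (n : ℝ≥0∞)⁻¹ := by gcongr; exact le_self_add
          _ ≤ s x + (f x - s x) := by gcongr
          _ = f x := add_tsub_cancel_of_le h1.le
      exact absurd h2 (not_lt.2 h3)
    have := tendsto_measure_iInter_atTop (μ := μ) (fun n => (hD n).nullMeasurableSet) hanti
      ⟨0, measure_ne_top _ _⟩
    rw [hemp, measure_empty] at this
    exact this

/-! ### tails -/

/-- tail code -/
def tl (N : ℕ) (i : ℕ) : ℕ := if N < i then i + 1 else 0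

lemma Hf_tail {X : Type*} [mX : MeasurableSpace X] (ν : Measure X) [IsProbabilityMeasure ν]
    {p : X → ℕ} (hp : Measurable p) (hfin : Hf ν p ≠ ⊤) :
    Filter.Tendsto (fun N => Hf ν (tl N ∘ p)) Filter.atTop (nhds 0) := by
  set f : ℕ → ℝ≥0∞ := fun i => ENNReal.ofReal (Real.negMulLog (ν.real (p ⁻¹' {i}))) with hf
  have h1 : ∀ N, Hf ν (tl N ∘ p) = ENNReal.ofReal (Real.negMulLog (ν.real {x | p x ≤ N})) +
      ∑' k, f (k + (N + 1)) := by
    intro N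
    unfold Hf
    rw [tsum_eq_zero_add' ENNReal.summable]
    congr 1
    · congr 3
      ext x; simp [tl]
    · rw [← ENNReal.summable.sum_add_tsum_nat_add' (k := N + 1)]
      rw [Finset.sum_eq_zero, zero_add]
      · congr 1; ext k
        have : (tl N ∘ p) ⁻¹' {k + (N + 1) + 1} = p ⁻¹' {k + (N + 1)} := by
          ext x; simp only [mem_preimage, mem_singleton_iff, comp_apply, tl]
          by_cases h : N < p x
          · rw [if_pos h]; omega
          · rw [if_neg h]; omega
        rw [this]
      · intro i hi
        have : (tl N ∘ p) ⁻¹' {i + 1} = ∅ := by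
          ext x
          simp only [Finset.mem_range] at hi
          simp only [mem_preimage, mem_singleton_iff, comp_apply, tl, mem_empty_iff_false, iff_false]
          by_cases h : N < p x
          · rw [if_pos h]; omega
          · rw [if_neg h]; omega
        simp [this]
  simp only [h1]
  rw [show (0 : ℝ≥0∞) = ENNReal.ofReal (Real.negMulLog 1) + 0 by simp]
  refine Filter.Tendsto.add ?_ ?_
  · refine ENNReal.tendsto_ofReal ((Real.continuous_negMulLog.tendsto 1).comp ?_)
    have hmono : Monotone (fun N => {x | p x ≤ N}) := fun N M h x hx => le_trans hx h
    have := tendsto_measure_iUnion_atTop (μ := ν) hmono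
    have hu : ⋃ N, {x | p x ≤ N} = univ := by
      ext x; simp only [mem_iUnion, mem_setOf_eq, mem_univ, iff_true]; exact ⟨p x, le_rfl⟩
    rw [hu, measure_univ] at this
    have := (ENNReal.tendsto_toReal ENNReal.one_ne_top).comp this
    exact this
  · exact (ENNReal.tendsto_sum_nat_add f hfin).comp (Filter.tendsto_add_atTop_nat 1)

lemma tail_small {X : Type*} (F : MeasurableSpace X) [mX : MeasurableSpace X]
    [StandardBorelSpace X] (μ : Measure X) [IsProbabilityMeasure μ] (hF : F ≤ mX)
    {p : X → ℕ} (hp : Measurable p) (hfin : ∫⁻ x, hd F μ p x ∂μ ≠ ⊤) {ε : ℝ≥0∞} (hε : 0 < ε) :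
    ∃ N, ∫⁻ x, hd F μ (tl N ∘ p) x ∂μ ≤ ε := by
  have hp' : ∀ i, MeasurableSet (p ⁻¹' {i}) := fun i => hp (measurableSet_singleton i)
  have hq : ∀ N, Measurable (tl N ∘ p) := fun N => measurable_from_top.comp hp
  have hq' : ∀ N i, MeasurableSet ((tl N ∘ p) ⁻¹' {i}) := fun N i => hq N (measurableSet_singleton i)
  have hk : ∀ᵐ x ∂μ, ∀ N, hd F μ (tl N ∘ p) x =
      Hf (ProbabilityTheory.condExpKernel μ F x) (tl N ∘ p) :=
    ae_all_iff.2 fun N => hd_ae_kernel F μ hF (hq' N)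
  have hk0 := hd_ae_kernel F μ hF hp'
  have hlt := ae_lt_top (hd_measurable F μ hF p) hfin
  have T : Filter.Tendsto (fun N => ∫⁻ x, hd F μ (tl N ∘ p) x ∂μ) Filter.atTop
      (nhds (∫⁻ x, 0 ∂μ)) := by
    refine tendsto_lintegral_of_dominated_convergence (hd F μ p)
      (fun N => hd_measurable F μ hF _) ?_ hfin ?_
    · intro N
      filter_upwards [hk, hk0] with x h1 h2
      have : Nonempty X := ⟨x⟩
      rw [h1, h2]
      exact Hf_comp_le _ hp' _
    · filter_upwards [hk, hk0, hlt] with x h1 h2 h3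
      have : Nonempty X := ⟨x⟩
      simp only [h1]
      exact Hf_tail _ hp (by rw [← h2]; exact h3.ne)
  simp only [lintegral_zero] at T
  obtain ⟨N, hN⟩ := (T.eventually (ge_mem_nhds hε)).exists
  exact ⟨N, hN⟩

/-! ### grid -/

lemma grid {X : Type*} (m : MeasurableSpace X) [mX : MeasurableSpace X]
    [StandardBorelSpace X] (μ : Measure X) [IsProbabilityMeasure μ] (hm : m ≤ mX)
    {p : X → ℕ} (hp : Measurable p) (N : ℕ) (p' : X → Fin (N + 1))
    (hp' : ∀ x, p x ≤ N → (p' x : ℕ) = p x) {ε : ℝ} (hε : 0 < ε) :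
    ∃ (K : ℕ) (D : (Fin (N + 1) → Fin (K + 1)) → Set X)
      (κ : (Fin (N + 1) → Fin (K + 1)) → Fin (N + 1) → ℝ),
      (∀ j, MeasurableSet[m] (D j)) ∧ Pairwise (Function.onFun Disjoint D) ∧
      (∀ᵐ x ∂μ, ∃ j, x ∈ D j) ∧ (∀ j a, 0 < κ j a) ∧ (∀ j, ∑ a, κ j a ≤ 1) ∧
      ∀ W, MeasurableSet[m] W →
        ∑ j, ∫⁻ x in D j ∩ W ∩ {x | p x ≤ N}, ENNReal.ofReal (-Real.log (κ j (p' x))) ∂μ ≤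
          ∫⁻ x in W, hd m μ p x ∂μ + ENNReal.ofReal ε := by
  classical
  have hpm : ∀ i, MeasurableSet (p ⁻¹' {i}) := fun i => hp (measurableSet_singleton i)
  obtain ⟨K, hK0, hKε⟩ : ∃ K : ℕ, 0 < K ∧ ((N + 1 : ℝ)) * (N + 1) / K ≤ ε := by
    obtain ⟨K, hK⟩ := exists_nat_gt (((N + 1 : ℝ)) * (N + 1) / ε)
    have hKp : (0 : ℝ) < K := lt_trans (by positivity) hK
    refine ⟨K, by exact_mod_cast hKp, ?_⟩
    rw [div_le_iff₀ hKp]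
    rw [div_lt_iff₀ hε] at hK
    linarith
  have hKp : (0 : ℝ) < K := by exact_mod_cast hK0
  set c : Fin (N + 1) → X → ℝ := fun a => cp m μ (p ⁻¹' {(a : ℕ)}) with hc
  set D : (Fin (N + 1) → Fin (K + 1)) → Set X := fun j => {x | ∀ a, ⌊K * c a x⌋₊ = j a} with hD
  set κ : (Fin (N + 1) → Fin (K + 1)) → Fin (N + 1) → ℝ :=
    fun j a => ((j a : ℕ) + 1 : ℝ) / ∑ b, ((j b : ℕ) + 1 : ℝ) with hκ
  have hSpos : ∀ j : (Fin (N + 1) → Fin (K + 1)), (0 : ℝ) < ∑ b, ((j b : ℕ) + 1 : ℝ) :=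
    fun j => Finset.sum_pos (fun b _ => by positivity) ⟨0, Finset.mem_univ _⟩
  have hκ0 : ∀ j a, 0 < κ j a := fun j a => div_pos (by positivity) (hSpos j)
  have hκs : ∀ j, ∑ a, κ j a = 1 := fun j => by
    simp only [hκ]; rw [← Finset.sum_div, div_self (hSpos j).ne']
  have hκ1 : ∀ j a, κ j a ≤ 1 := fun j a =>
    (Finset.single_le_sum (fun b _ => (hκ0 j b).le) (Finset.mem_univ a)).trans (hκs j).le
  have hDm : ∀ j, MeasurableSet[m] (D j) := by
    intro j
    have : D j = ⋂ a, {x | ⌊K * c a x⌋₊ = j a} := by ext x; simp [hD]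
    rw [this]
    refine MeasurableSet.iInter fun a => ?_
    have h1 : Measurable[m] (fun x => K * c a x) := (cp_measurable' m μ _).const_mul _
    have h2 : Measurable[m] (fun x => ⌊K * c a x⌋₊) := Nat.measurable_floor.comp h1
    exact h2 (measurableSet_singleton _)
  have hDd : Pairwise (Function.onFun Disjoint D) := by
    intro i j hij
    refine Set.disjoint_left.2 fun x hx hx' => hij ?_
    ext a
    rw [← hx a, ← hx' a]
  have hc01 : ∀ᵐ x ∂μ, ∀ a, c a x ∈ Icc (0 : ℝ) 1 :=
    ae_all_iff.2 fun a => cp_mem m μ hm (hpm a)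
  have hcs : ∀ᵐ x ∂μ, ∑ a, c a x ≤ 1 := by
    have hk : ∀ᵐ x ∂μ, ∀ a : Fin (N + 1), c a x =
      (ProbabilityTheory.condExpKernel μ m x).real (p ⁻¹' {(a : ℕ)}) :=
      ae_all_iff.2 fun a => cp_ae_kernel m μ hm (hpm a)
    filter_upwards [hk] with x hx
    have : Nonempty X := ⟨x⟩
    simp only [hx]
    rw [← measureReal_biUnion_finset]
    · exact measureReal_le_one
    · intro a _ b _ hab
      refine Set.disjoint_left.2 fun y hy hy' => hab (Fin.ext ?_)
      simp at hy hy'; omega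
    · exact fun a _ => hpm a
  refine ⟨K, D, κ, hDm, hDd, ?_, hκ0, fun j => (hκs j).le, ?_⟩
  · filter_upwards [hc01] with x hx
    refine ⟨fun a => ⟨⌊K * c a x⌋₊, ?_⟩, fun a => rfl⟩
    rw [Nat.lt_succ_iff]
    refine Nat.floor_le_of_le ?_
    have := (hx a).2
    nlinarith
  · intro W hW
    have hcm : ∀ a, Measurable (c a) := fun a => cp_measurable m μ hm _
    have hpt : ∀ᵐ x ∂μ, ∀ j, x ∈ D j → ∑ a, ENNReal.ofReal (c a x) * ENNReal.ofReal (-Real.log (κ j a)) ≤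
        hd m μ p x + ENNReal.ofReal ε := by
      filter_upwards [hc01, hcs] with x h01 hs j hxj
      have hsum : ∑ b, ((j b : ℕ) + 1 : ℝ) ≤ K + (N + 1) := by
        rw [Finset.sum_add_distrib]
        have : ∑ b, ((j b : ℕ) : ℝ) ≤ ∑ b, K * c b x := by
          refine Finset.sum_le_sum fun b _ => ?_
          rw [← hxj b]
          exact Nat.floor_le (mul_nonneg hKp.le (h01 b).1)
        rw [← Finset.mul_sum] at this
        have h2 : (K : ℝ) * ∑ b, c b x ≤ K := by nlinarith
        simp only [Finset.sum_const, Finset.card_univ, Fintype.card_fin, nsmul_eq_mul, mul_one]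
        push_cast; linarith
      have hterm : ∀ a, ENNReal.ofReal (c a x) * ENNReal.ofReal (-Real.log (κ j a)) ≤
          ENNReal.ofReal (Real.negMulLog (c a x)) + ENNReal.ofReal ((N + 1) / K) := by
        intro a
        rw [← ENNReal.ofReal_mul (h01 a).1, ← ENNReal.ofReal_add
          (Real.negMulLog_nonneg (h01 a).1 (h01 a).2) (by positivity)]
        refine ENNReal.ofReal_le_ofReal ?_
        rcases (h01 a).1.eq_or_lt with h | h
        · rw [← h]; simp; positivity
        · have hge : K * c a x / (K + (N + 1)) ≤ κ j a := by
            simp only [hκ]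
            rw [div_le_div_iff₀ (by positivity) (hSpos j)]
            have h1 : K * c a x ≤ (j a : ℕ) + 1 := by
              rw [← hxj a]; exact (Nat.lt_floor_add_one _).le
            have h2 : 0 ≤ K * c a x := by positivity
            have := mul_le_mul h1 hsum (hSpos j).le (by positivity)
            linarith
          have hlog : Real.log (c a x) - (N + 1) / K ≤ Real.log (κ j a) := by
            refine le_trans ?_ (Real.log_le_log (by positivity) hge)
            have e : K * c a x / (K + (N + 1)) = c a x / (1 + (N + 1) / K) := by
              field_simp
            rw [e, Real.log_div h.ne' (by positivity)]
            have := Real.log_le_sub_one_of_pos (x := 1 + ((N : ℝ) + 1) / K) (by positivity)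
            linarith
          have hr : (0 : ℝ) ≤ (N + 1) / K := by positivity
          have h1 := (h01 a).2
          unfold Real.negMulLog
          nlinarith [mul_le_mul_of_nonneg_left hlog h.le]
      calc _ ≤ ∑ a : Fin (N + 1), (ENNReal.ofReal (Real.negMulLog (c a x)) + ENNReal.ofReal ((N + 1) / K)) :=
            Finset.sum_le_sum fun a _ => hterm a
        _ = ∑ a : Fin (N + 1), ENNReal.ofReal (Real.negMulLog (c a x)) +
            ENNReal.ofReal ((N + 1) * (N + 1) / K) := by
            rw [Finset.sum_add_distrib]
            congr 1
            rw [Finset.sum_const, Finset.card_univ, Fintype.card_fin, nsmul_eq_mul,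
              ← ENNReal.ofReal_natCast, ← ENNReal.ofReal_mul (by positivity)]
            congr 1; push_cast; ring
        _ ≤ _ := by
            refine add_le_add ?_ (ENNReal.ofReal_le_ofReal hKε)
            rw [Fin.sum_univ_eq_sum_range
              (fun i => ENNReal.ofReal (Real.negMulLog (cp m μ (p ⁻¹' {i}) x))) (N + 1)]
            exact ENNReal.sum_le_tsum _
    have hDX : ∀ j, MeasurableSet (D j ∩ W) := fun j => (hm _ (hDm j)).inter (hm _ hW)
    have hj : ∀ j, ∫⁻ x in D j ∩ W ∩ {x | p x ≤ N}, ENNReal.ofReal (-Real.log (κ j (p' x))) ∂μ ≤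
        ∫⁻ x in D j ∩ W, (hd m μ p x + ENNReal.ofReal ε) ∂μ := by
      intro j
      have e1 : D j ∩ W ∩ {x | p x ≤ N} = ⋃ a : Fin (N + 1), (D j ∩ W) ∩ p ⁻¹' {(a : ℕ)} := by
        ext x
        simp only [mem_inter_iff, mem_setOf_eq, mem_iUnion, mem_preimage, mem_singleton_iff]
        constructor
        · rintro ⟨h, h2⟩; exact ⟨⟨p x, by omega⟩, h, rfl⟩
        · rintro ⟨a, h, h2⟩; exact ⟨h, by omega⟩
      rw [e1, lintegral_iUnion, tsum_fintype]
      · calc _ = ∑ a, ∫⁻ x in D j ∩ W, ENNReal.ofReal (c a x) * ENNReal.ofReal (-Real.log (κ j a)) ∂μ := by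
              refine Finset.sum_congr rfl fun a _ => ?_
              rw [setLIntegral_congr_fun (g := fun _ => ENNReal.ofReal (-Real.log (κ j a)))
                ((hDX j).inter (hpm a)), setLIntegral_const,
                lintegral_mul_const _ (hcm a).ennreal_ofReal, mul_comm]
              · congr 1
                have hi : Integrable (c a) μ := integrable_condExp
                rw [← ofReal_integral_eq_lintegral_ofReal hi.integrableOn
                  (ae_restrict_of_ae (hc01.mono fun x hx => (hx a).1)),
                  setIntegral_cp m μ hm (hpm a) (MeasurableSet.inter (hDm j) hW),
                  ofReal_measureReal, inter_comm]
              · intro x hx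
                have h1 : p x = a := hx.2
                have : p' x = a := Fin.ext (by rw [hp' x (by omega), h1])
                simp only [this]
          _ = ∫⁻ x in D j ∩ W, ∑ a, ENNReal.ofReal (c a x) * ENNReal.ofReal (-Real.log (κ j a)) ∂μ := by
              rw [lintegral_finsetSum]
              exact fun a _ => (ENNReal.measurable_ofReal.comp (hcm a)).mul_const _
          _ ≤ _ := by
              refine lintegral_mono_ae ?_
              refine (ae_restrict_iff' (hDX j)).2 ?_
              filter_upwards [hpt] with x hx hxj
              exact hx j hxj.1
      · exact fun a => (hDX j).inter (hpm a)
      · intro a b hab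
        refine Set.disjoint_left.2 fun y hy hy' => hab (Fin.ext ?_)
        have := hy.2; have := hy'.2
        simp at *; omega
    calc _ ≤ ∑ j, ∫⁻ x in D j ∩ W, (hd m μ p x + ENNReal.ofReal ε) ∂μ :=
          Finset.sum_le_sum fun j _ => hj j
      _ = ∫⁻ x in ⋃ j, D j ∩ W, (hd m μ p x + ENNReal.ofReal ε) ∂μ := by
          rw [lintegral_iUnion hDX, tsum_fintype]
          intro i j hij
          exact (hDd hij).mono inter_subset_left inter_subset_left
      _ ≤ ∫⁻ x in W, (hd m μ p x + ENNReal.ofReal ε) ∂μ :=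
          lintegral_mono_set (iUnion_subset fun j => inter_subset_right)
      _ ≤ _ := by
          rw [lintegral_add_right _ measurable_const]
          gcongr
          rw [setLIntegral_const]
          calc _ ≤ ENNReal.ofReal ε * 1 := by gcongr; exact prob_le_one
            _ = _ := mul_one _

/-! ### localization -/

lemma cp_local {X : Type*} (m : MeasurableSpace X) [mX : MeasurableSpace X]
    [StandardBorelSpace X] (μ : Measure X) [IsProbabilityMeasure μ] {Z A B : Set X}
    (hZ : MeasurableSet[m] Z) (hA : MeasurableSet A) (hB : MeasurableSet B)
    (hAB : Z ∩ A = Z ∩ B) : ∀ᵐ x ∂μ, x ∈ Z → cp m μ A x = cp m μ B x := by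
  have hA' : Integrable (A.indicator (fun _ => (1 : ℝ))) μ := integrable_ind μ hA
  have hB' : Integrable (B.indicator (fun _ => (1 : ℝ))) μ := integrable_ind μ hB
  have h1 := condExp_indicator (m := m) hA' hZ
  have h2 := condExp_indicator (m := m) hB' hZ
  rw [indicator_indicator, hAB, ← indicator_indicator] at h1
  filter_upwards [h1, h2] with x h1 h2 hx
  have h3 := h1.symm.trans h2
  rw [indicator_of_mem hx, indicator_of_mem hx] at h3
  exact h3

lemma hd_local {X ι : Type*} [Countable ι] (m : MeasurableSpace X) [mX : MeasurableSpace X]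
    [StandardBorelSpace X] (μ : Measure X) [IsProbabilityMeasure μ] {Z : Set X} {a b : X → ι}
    (hZ : MeasurableSet[m] Z) (ha : ∀ i, MeasurableSet (a ⁻¹' {i}))
    (hb : ∀ i, MeasurableSet (b ⁻¹' {i})) (hab : ∀ x ∈ Z, a x = b x) :
    ∀ᵐ x ∂μ, x ∈ Z → hd m μ a x = hd m μ b x := by
  have : ∀ᵐ x ∂μ, ∀ i, x ∈ Z → cp m μ (a ⁻¹' {i}) x = cp m μ (b ⁻¹' {i}) x := by
    refine ae_all_iff.2 fun i => cp_local m μ hZ (ha i) (hb i) ?_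
    ext x
    simp only [mem_inter_iff, mem_preimage, mem_singleton_iff, and_congr_right_iff]
    intro hx; rw [hab x hx]
  filter_upwards [this] with x hx hxZ
  unfold hd
  simp only [fun i => hx i hxZ]

/-- completion of a sub-sigma-algebra -/
@[reducible] def emS {X : Type*} (n : MeasurableSpace X) [mX : MeasurableSpace X] (μ : Measure X) :
    MeasurableSpace X := eventuallyMeasurableSpace n (ae μ)

/-- sets whose trace is measurable -/
@[reducible] def onW {X : Type*} (M : MeasurableSpace X) (W : Set X) (hW : MeasurableSet[M] W) :
    MeasurableSpace X where
  MeasurableSet' A := MeasurableSet[M] (A ∩ W)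
  measurableSet_empty := by rw [empty_inter]; exact @MeasurableSet.empty _ M
  measurableSet_compl := fun s hs => by
    have : sᶜ ∩ W = W \ (s ∩ W) := by ext x; simp; tauto
    rw [this]; exact MeasurableSet.diff hW hs
  measurableSet_iUnion := fun s hs => by
    rw [iUnion_inter]; exact MeasurableSet.iUnion hs

lemma invAlg_sup {G X : Type*} {m₁ m₂ : MeasurableSpace X} [Group G] [MulAction G X]
    (h1 : InvariantAlg G m₁) (h2 : InvariantAlg G m₂) : InvariantAlg G (m₁ ⊔ m₂) := by
  intro g
  have k1 : m₁ ≤ m₁.map (fun x => g • x) := fun A hA => h1 g A hA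
  have k2 : m₂ ≤ m₂.map (fun x => g • x) := fun A hA => h2 g A hA
  have : m₁ ⊔ m₂ ≤ (m₁ ⊔ m₂).map (fun x => g • x) :=
    sup_le (k1.trans (MeasurableSpace.monotone_map le_sup_left))
      (k2.trans (MeasurableSpace.monotone_map le_sup_right))
  exact fun A hA => this A hA

lemma inv_sigmaG {G X : Type*} [Group G] [MulAction G X] (ξ : Set (Set X)) :
    InvariantAlg G (sigmaG G ξ) := by
  intro g
  have : sigmaG G ξ ≤ (sigmaG G ξ).map (fun x => g • x) := by
    refine MeasurableSpace.generateFrom_le ?_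
    rintro B ⟨h, A, hA, rfl⟩
    refine MeasurableSpace.measurableSet_generateFrom ⟨h * g, A, hA, ?_⟩
    ext x; simp [mul_smul]
  exact fun A hA => this A hA

lemma inv_invSigma {G X : Type*} [Group G] [MulAction G X] [mX : MeasurableSpace X] :
    InvariantAlg G (invSigma G X) := by
  intro g
  have : invSigma G X ≤ (invSigma G X).map (fun x => g • x) := by
    refine MeasurableSpace.generateFrom_le ?_
    rintro B ⟨h, h2⟩
    refine MeasurableSpace.measurableSet_generateFrom ?_
    rw [h2 g]; exact ⟨h, h2⟩
  exact fun A hA => this A hA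

lemma inv_em {G X : Type*} (n : MeasurableSpace X) [Group G] [MulAction G X]
    [mX : MeasurableSpace X] (μ : Measure X) (hpmp : IsPmp G μ) (hn : InvariantAlg G n) :
    InvariantAlg G (emS n μ) := by
  rintro g A ⟨B, hB, hAB⟩
  exact ⟨_, hn g B hB, (hpmp g).quasiMeasurePreserving.preimage_ae_eq hAB⟩

lemma lift_alg {G X : Type*} (n F : MeasurableSpace X) [Group G] [MulAction G X]
    [mX : MeasurableSpace X] (μ : Measure X) (hpmp : IsPmp G μ) (hn : InvariantAlg G n)
    (hF : F ≤ n) (hI : invSigma G X ≤ n) {W : Set X} (hWn : MeasurableSet[n] W)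
    (hW : ∀ (g : G) (x : X), g • x ∈ W ↔ x ∈ W) (α Q : ℕ → Set X)
    (hα : ∀ i, MeasurableSet[emS n μ] (α i ∩ W))
    (hQ : SubsetMod (sigmaG G (Set.range α) ⊔ F ⊔ invSigma G X) μ (Set.range Q)) :
    ∀ A, MeasurableSet[MeasurableSpace.generateFrom (Set.range Q) ⊔ F ⊔ invSigma G X] A →
      MeasurableSet[emS n μ] (A ∩ W) := by
  have hWe : MeasurableSet[emS n μ] W := le_eventuallyMeasurableSpace _ hWn
  have hFI : F ⊔ invSigma G X ≤ onW (emS n μ) W hWe := by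
    intro A hA
    exact MeasurableSet.inter (le_eventuallyMeasurableSpace _ (sup_le hF hI _ hA)) hWe
  have h1 : sigmaG G (Set.range α) ⊔ F ⊔ invSigma G X ≤ onW (emS n μ) W hWe := by
    rw [sup_assoc]
    refine sup_le (MeasurableSpace.generateFrom_le ?_) hFI
    rintro B ⟨g, A, ⟨i, rfl⟩, rfl⟩
    change MeasurableSet[emS n μ] ((fun x => g • x) ⁻¹' α i ∩ W)
    have : (fun x => g • x) ⁻¹' α i ∩ W = (fun x => g • x) ⁻¹' (α i ∩ W) := by
      ext x; simp [hW]
    rw [this]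
    exact inv_em n μ hpmp hn g _ (hα i)
  have h2 : MeasurableSpace.generateFrom (Set.range Q) ⊔ F ⊔ invSigma G X ≤
      onW (emS n μ) W hWe := by
    rw [sup_assoc]
    refine sup_le (MeasurableSpace.generateFrom_le ?_) hFI
    intro A hA
    obtain ⟨B, hB, hAB⟩ := hQ A hA
    obtain ⟨B', hB', hBB'⟩ := h1 B hB
    refine ⟨B', hB', ?_⟩
    have hab : A =ᵐ[μ] B := measure_symmDiff_eq_zero_iff.1 hAB
    exact (hab.inter (Filter.EventuallyEq.refl _ W)).trans hBB'
  exact fun A hA => h2 A hA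

lemma det_on {X : Type*} (m : MeasurableSpace X) [mX : MeasurableSpace X]
    [StandardBorelSpace X] (μ : Measure X) [IsProbabilityMeasure μ] (hm : m ≤ mX) {Z A : Set X}
    (hZ : MeasurableSet[m] Z) (hA : MeasurableSet A)
    (h01 : ∀ᵐ x ∂μ, x ∈ Z → cp m μ A x = 0 ∨ cp m μ A x = 1) :
    MeasurableSet[emS m μ] (A ∩ Z) := by
  set U : Set X := Z ∩ cp m μ A ⁻¹' {1}
  set V : Set X := Z ∩ cp m μ A ⁻¹' {0}
  have hU : MeasurableSet[m] U :=
    MeasurableSet.inter hZ (cp_measurable' m μ A (measurableSet_singleton 1))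
  have hV : MeasurableSet[m] V :=
    MeasurableSet.inter hZ (cp_measurable' m μ A (measurableSet_singleton 0))
  have hU0 : μ (U \ A) = 0 := by
    have h1 := setIntegral_cp m μ hm hA hU
    rw [setIntegral_congr_fun (g := fun _ => (1 : ℝ)) (hm _ hU) (fun x hx => hx.2)] at h1
    simp only [integral_const, smul_eq_mul, mul_one, measureReal_restrict_apply_univ] at h1
    have h2 := measureReal_inter_add_diff (μ := μ) (s := U) hA
    rw [inter_comm, ← h1] at h2
    have h3 : μ.real (U \ A) = 0 := by linarith
    exact (measureReal_eq_zero_iff (measure_ne_top _ _)).1 h3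
  have hV0 : μ (A ∩ V) = 0 := by
    have h1 := setIntegral_cp m μ hm hA hV
    rw [setIntegral_congr_fun (g := fun _ => (0 : ℝ)) (hm _ hV) (fun x hx => hx.2)] at h1
    simp only [integral_zero] at h1
    exact (measureReal_eq_zero_iff (measure_ne_top _ _)).1 h1.symm
  refine ⟨U, hU, ?_⟩
  filter_upwards [h01, measure_eq_zero_iff_ae_notMem.1 hU0, measure_eq_zero_iff_ae_notMem.1 hV0]
    with x h01 h1 h2
  change (x ∈ A ∩ Z) = (x ∈ U)
  refine propext ⟨fun h => ?_, fun h => ?_⟩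
  · rcases h01 h.2 with h' | h'
    · exact absurd (⟨h.1, h.2, h'⟩ : x ∈ A ∩ V) h2
    · exact ⟨h.2, h'⟩
  · by_contra hc
    exact h1 ⟨h, fun hA => hc ⟨hA, h.1⟩⟩

lemma cp_eq_on {X : Type*} (m m' : MeasurableSpace X) [mX : MeasurableSpace X]
    [StandardBorelSpace X] (μ : Measure X) [IsProbabilityMeasure μ] (hmm : m ≤ m') (hm' : m' ≤ mX) {Z A : Set X}
    (hZ : MeasurableSet[m] Z) (hA : MeasurableSet A)
    (hZm : ∀ B, MeasurableSet[m'] B → MeasurableSet[emS m μ] (B ∩ Z)) :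
    ∀ᵐ x ∂μ, x ∈ Z → cp m μ A x = cp m' μ A x := by
  have hm := hmm.trans hm'
  have hA' : Integrable (A.indicator (fun _ => (1 : ℝ))) μ := integrable_ind μ hA
  have h2 := condExp_indicator (m := m') hA' (hmm _ hZ)
  have hci : Integrable (cp m μ A) μ := integrable_condExp
  have hZX := hm _ hZ
  have h1 : Z.indicator (cp m μ A) =ᵐ[μ] μ[Z.indicator (A.indicator (fun _ => (1 : ℝ))) | m'] := by
    refine ae_eq_condExp_of_forall_setIntegral_eq hm' (hA'.indicator hZX)
      (fun s _ _ => (hci.indicator hZX).integrableOn) ?_ ?_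
    · intro s hs _
      obtain ⟨t, ht, hst⟩ := hZm s hs
      rw [setIntegral_indicator hZX, setIntegral_indicator hZX, setIntegral_congr_set hst,
        setIntegral_congr_set hst, setIntegral_cp m μ hm hA ht, integral_indicator hA]
      simp [measureReal_def, Measure.restrict_apply, hA]
    · have : Measurable[m'] (Z.indicator (cp m μ A)) :=
        ((cp_measurable' m μ A).mono hmm le_rfl).indicator (hmm _ hZ)
      exact this.stronglyMeasurable.aestronglyMeasurable
  filter_upwards [h1, h2] with x h1 h2 hx
  have h3 := h1.trans h2
  rw [indicator_of_mem hx, indicator_of_mem hx] at h3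
  exact h3

/-! ### decoding -/

lemma decode {G X A : Type*} [Countable A] {M : MeasurableSpace X} [Group G] [MulAction G X]
    (hM : InvariantAlg G M) (g : ℕ → G) (B : ℕ → Set X)
    (hB : ∀ n, MeasurableSet[M] (B n)) (p : X → A)
    (v : ℕ → X → Option A) (hv1 : ∀ n x, x ∈ B n → v n (g n • x) = some (p x))
    (hv0 : ∀ n x, x ∉ B n → v n (g n • x) = none) (K : ℕ) {W : Set X}
    (hW : ∀ (g : G) (x : X), g • x ∈ W ↔ x ∈ W) (hBW : ∀ n, B n ⊆ W)
    (hR : ∀ l, MeasurableSet[M] ((fun x => (List.range K).filterMap (v · x)) ⁻¹' {l} ∩ W))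
    (n : ℕ) (hn : n < K) (a : A) : MeasurableSet[M] (B n ∩ p ⁻¹' {a}) := by
  classical
  have hs : ∀ k, MeasurableSet[M] {c | (v k c).isSome} := by
    intro k
    have : {c | (v k c).isSome} = (fun x => (g k)⁻¹ • x) ⁻¹' B k := by
      ext c
      simp only [mem_setOf_eq, mem_preimage]
      by_cases h : (g k)⁻¹ • c ∈ B k
      · have := hv1 k _ h; rw [smul_inv_smul] at this; simp [this, h]
      · have := hv0 k _ h; rw [smul_inv_smul] at this; simp [this, h]
    rw [this]; exact hM _ _ (hB k)
  have hlen : ∀ k i, MeasurableSet[M] {c | ((List.range k).filterMap (v · c)).length = i} := by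
    intro k
    induction k with
    | zero => intro i; simp only [List.range_zero, List.filterMap_nil]; exact MeasurableSet.const _
    | succ k ih =>
      intro i
      have : {c | ((List.range (k + 1)).filterMap (v · c)).length = i} =
          ({c | (v k c).isSome} ∩ ⋃ i' ∈ {i' | i' + 1 = i},
            {c | ((List.range k).filterMap (v · c)).length = i'}) ∪
          ({c | (v k c).isSome}ᶜ ∩ {c | ((List.range k).filterMap (v · c)).length = i}) := by
        ext c
        simp only [List.range_succ, List.filterMap_append, List.length_append, mem_setOf_eq,
          mem_union, mem_inter_iff, mem_iUnion, mem_compl_iff, exists_prop]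
        cases h : v k c with
        | none => simp [h]
        | some b => simp [h]
      rw [this]
      exact ((hs k).inter (MeasurableSet.biUnion (to_countable _) fun i' _ => ih i')).union
        ((hs k).compl.inter (ih i))
  have key : B n ∩ p ⁻¹' {a} = B n ∩ ⋃ y ∈ {y : List A × ℕ | y.1[y.2]? = some a},
      (fun x => g n • x) ⁻¹' (((fun x => (List.range K).filterMap (v · x)) ⁻¹' {y.1} ∩ W) ∩
        {c | ((List.range n).filterMap (v · c)).length = y.2}) := by
    ext x
    simp only [mem_inter_iff, and_congr_right_iff, mem_preimage, mem_singleton_iff, mem_iUnion,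
      mem_setOf_eq, exists_prop]
    intro hx
    have hget : ((List.range K).filterMap (v · (g n • x)))[((List.range n).filterMap
        (v · (g n • x))).length]? = some (p x) := by
      obtain ⟨d, rfl⟩ : ∃ d, K = n + (d + 1) := ⟨K - n - 1, by omega⟩
      rw [List.range_add, List.filterMap_append, List.getElem?_append_right le_rfl, Nat.sub_self,
        List.range_succ_eq_map, List.map_cons, List.filterMap_cons]
      simp [hv1 n x hx]
    constructor
    · intro h
      exact ⟨(_, _), by rw [← h]; exact hget, ⟨rfl, (hW _ _).2 (hBW n hx)⟩, rfl⟩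
    · rintro ⟨⟨l, i⟩, h1, ⟨h2, -⟩, h3⟩
      simp only at h1 h2 h3
      rw [h2, h3, h1] at hget
      exact (Option.some.inj hget).symm
  rw [key]
  refine (hB n).inter (MeasurableSet.biUnion (to_countable _) fun y _ => ?_)
  exact hM _ _ ((hR _).inter (hlen _ _))

lemma decodeY {G X : Type*} (n : MeasurableSpace X) [Group G] [Countable G] [MulAction G X]
    [mX : MeasurableSpace X] (μ : Measure X) (hpmp : IsPmp G μ) (hn : InvariantAlg G n)
    (hI : invSigma G X ≤ n) {C : Set X} (hC : MeasurableSet C) (hCn : MeasurableSet[n] C)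
    (hone : ∀ x ∈ C, ∀ g : G, g • x ∈ C → g • x = x) {p : X → ℕ} (hp : Measurable p) (i : ℕ) :
    MeasurableSet[n] (p ⁻¹' {i} ∩ sat G C) := by
  set E : G → Set X := fun g => {x | ∃ h : G, h • x ∈ C ∧ p (g⁻¹ • h • x) = i} with hE
  have hEm : ∀ g, MeasurableSet (E g) := by
    intro g
    have : E g = ⋃ h : G, (fun x => h • x) ⁻¹' (C ∩ (fun x => g⁻¹ • x) ⁻¹' (p ⁻¹' {i})) := by
      ext x; simp [hE]
    rw [this]
    exact MeasurableSet.iUnion fun h => (hpmp h).measurable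
      (hC.inter ((hpmp g⁻¹).measurable (hp (measurableSet_singleton i))))
  have hEI : ∀ g, MeasurableSet[n] (E g) := by
    intro g
    refine hI _ (inv_mem_invSigma (hEm g) ?_)
    intro k x
    constructor
    · rintro ⟨h, h1, h2⟩
      exact ⟨h * k, by rwa [mul_smul], by rwa [mul_smul]⟩
    · rintro ⟨h, h1, h2⟩
      refine ⟨h * k⁻¹, ?_, ?_⟩
      · rwa [mul_smul, inv_smul_smul]
      · rwa [mul_smul h, inv_smul_smul]
  have : p ⁻¹' {i} ∩ sat G C = ⋃ g : G, (fun x => g • x) ⁻¹' C ∩ E g := by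
    ext x
    simp only [mem_inter_iff, mem_iUnion, mem_preimage, mem_singleton_iff]
    constructor
    · rintro ⟨h1, g, hg⟩
      exact ⟨g, hg, g, hg, by rwa [inv_smul_smul]⟩
    · rintro ⟨g, hg, h, h1, h2⟩
      refine ⟨?_, g, hg⟩
      have := hone _ hg (h * g⁻¹) (by rwa [mul_smul, inv_smul_smul])
      rw [mul_smul, inv_smul_smul] at this
      rwa [this, inv_smul_smul] at h2
  rw [this]
  exact MeasurableSet.iUnion fun g => MeasurableSet.inter (hn g _ hCn) (hEI g)

/-! ### the main part -/

lemma wdecode {G X J : Type*} [Fintype J] {M : MeasurableSpace X} [Group G] [MulAction G X]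
    (hM : InvariantAlg G M) {W : Set X} (hW : ∀ (g : G) (x : X), g • x ∈ W ↔ x ∈ W)
    (g : ℕ → G) {C : Set X} (hC : MeasurableSet[M] C)
    (D : J → Set X) (hD : ∀ j, MeasurableSet[M] (D j ∩ W))
    (p : X → ℕ) (N K : ℕ) (p' : X → Fin (N + 1)) (hp' : ∀ x, p x ≤ N → (p' x : ℕ) = p x)
    (A : ℕ → Set X) (hA : A = disjointed (fun n => (fun x => g n • x) ⁻¹' C))
    (hS : ∀ i, MeasurableSet[M] ((tl N ∘ p) ⁻¹' {i} ∩ W))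
    (T : X → ℕ) (hT1 : ∀ x ∈ W, (∀ n < K, x ∉ A n) → p x ≤ N → T x = p x + 1)
    (hT0 : ∀ x, T x = 0 ∨ T x = p x + 1)
    (hT : ∀ i, MeasurableSet[M] (T ⁻¹' {i} ∩ W))
    (B : J → ℕ → Set X) (hB : ∀ j n, B j n = A n ∩ (D j ∩ W ∩ {x | p x ≤ N}))
    (v : J → ℕ → X → Option (Fin (N + 1)))
    (hv1 : ∀ j n x, x ∈ B j n → v j n (g n • x) = some (p' x))
    (hv0 : ∀ j n x, x ∉ B j n → v j n (g n • x) = none)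
    (hR : ∀ j l, MeasurableSet[M] ((fun x => (List.range K).filterMap (v j · x)) ⁻¹' {l} ∩ W))
    (hO : ∀ O ⊆ {x | ∀ j, x ∉ D j}, MeasurableSet[M] O) (i : ℕ) :
    MeasurableSet[M] (p ⁻¹' {i} ∩ W) := by
  by_cases hi : N < i
  · have : p ⁻¹' {i} ∩ W = (tl N ∘ p) ⁻¹' {i + 1} ∩ W := by
      ext x
      simp only [mem_inter_iff, mem_preimage, mem_singleton_iff, comp_apply, tl]
      by_cases h : N < p x
      · rw [if_pos h]; simp
      · rw [if_neg h]
        constructor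
        · rintro ⟨h1, -⟩; omega
        · rintro ⟨h1, -⟩; omega
    rw [this]; exact hS _
  · have hAm : ∀ n, MeasurableSet[M] (A n) := by
      rw [hA]
      exact fun n => MeasurableSet.disjointed (fun k => hM _ _ hC) n
    have hBm : ∀ j n, MeasurableSet[M] (B j n) := by
      intro j n
      have : B j n = A n ∩ ((D j ∩ W) ∩ ((tl N ∘ p) ⁻¹' {0} ∩ W)) := by
        rw [hB]; ext x
        simp only [mem_inter_iff, mem_preimage, mem_singleton_iff, comp_apply, tl, mem_setOf_eq]
        by_cases h : N < p x
        · rw [if_pos h]; simp; omega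
        · rw [if_neg h]; simp at h; tauto
      rw [this]
      exact (hAm n).inter ((hD j).inter (hS 0))
    have hdec : ∀ j, ∀ n < K, ∀ a, MeasurableSet[M] (B j n ∩ p' ⁻¹' {a}) := fun j n hn a =>
      decode hM g (B j) (hBm j) p' (v j) (hv1 j) (hv0 j) K hW
        (fun k x hx => by rw [hB] at hx; exact hx.2.1.2) (hR j) n hn a
    have hi' : i < N + 1 := by omega
    have key : p ⁻¹' {i} ∩ W = (T ⁻¹' {i + 1} ∩ W) ∪
        ((⋃ j, ⋃ n ∈ Finset.range K, B j n ∩ p' ⁻¹' {⟨i, hi'⟩}) ∪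
          (p ⁻¹' {i} ∩ W ∩ {x | ∀ j, x ∉ D j})) := by
      ext x
      simp only [mem_inter_iff, mem_preimage, mem_singleton_iff, mem_union, mem_iUnion,
        Finset.mem_range, mem_setOf_eq, exists_prop]
      constructor
      · rintro ⟨h1, h2⟩
        by_cases h3 : ∀ j, x ∉ D j
        · exact Or.inr (Or.inr ⟨⟨h1, h2⟩, h3⟩)
        · push Not at h3
          obtain ⟨j, hj⟩ := h3
          by_cases h4 : ∀ n < K, x ∉ A n
          · exact Or.inl ⟨by rw [hT1 x h2 h4 (by omega), h1], h2⟩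
          · push Not at h4
            obtain ⟨n, hn, hxn⟩ := h4
            refine Or.inr (Or.inl ⟨j, n, hn, ?_, ?_⟩)
            · rw [hB]; exact ⟨hxn, ⟨hj, h2⟩, (by omega : p x ≤ N)⟩
            · ext; rw [hp' x (by omega), h1]
      · rintro (⟨h1, h2⟩ | ⟨j, n, hn, h1, h2⟩ | ⟨⟨h1, h2⟩, h3⟩)
        · refine ⟨?_, h2⟩
          rcases hT0 x with h | h <;> omega
        · rw [hB] at h1
          have h3 := congrArg Fin.val h2
          rw [hp' x h1.2.2] at h3
          exact ⟨h3, h1.2.1.2⟩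
        · exact ⟨h1, h2⟩
    rw [key]
    refine (hT _).union (MeasurableSet.union ?_ (hO _ inter_subset_right))
    exact MeasurableSet.iUnion fun j => Finset.measurableSet_biUnion _ fun n hn =>
      hdec j n (Finset.mem_range.1 hn) _

lemma lint_pair {X : Type*} (m : MeasurableSpace X) [mX : MeasurableSpace X]
    [StandardBorelSpace X] (μ : Measure X) [IsProbabilityMeasure μ] (hm : m ≤ mX)
    {ι κ : Type*} [Countable ι] [Countable κ] {a : X → ι} {b : X → κ}
    (ha : ∀ i, MeasurableSet (a ⁻¹' {i})) (hb : ∀ i, MeasurableSet (b ⁻¹' {i})) :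
    ∫⁻ x, hd m μ (fun x => (a x, b x)) x ∂μ ≤ ∫⁻ x, hd m μ a x ∂μ + ∫⁻ x, hd m μ b x ∂μ := by
  rw [← lintegral_add_left (hd_measurable m μ hm a)]
  exact lintegral_mono_ae (hd_pair m μ hm ha hb)

lemma code_fiber {X ι : Type*} [Countable ι] {M : MeasurableSpace X} {W : Set X} (f : X → ι)
    (hf : ∀ i, MeasurableSet[M] (f ⁻¹' {i} ∩ W)) (S : Set ι) : MeasurableSet[M] (f ⁻¹' S ∩ W) := by
  have : f ⁻¹' S ∩ W = ⋃ i ∈ S, f ⁻¹' {i} ∩ W := by ext x; simp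
  rw [this]
  exact MeasurableSet.biUnion (to_countable _) fun i _ => hf i

lemma wpart {G X : Type*} (F m m' : MeasurableSpace X) [Group G] [Countable G]
    [mX : MeasurableSpace X] [StandardBorelSpace X] [MulAction G X] (μ : Measure X)
    [IsProbabilityMeasure μ] (hpmp : IsPmp G μ) (hFm : F ≤ m) (hm : m ≤ mX) (hm' : m' ≤ mX)
    {W : Set X} (hWm' : MeasurableSet[m'] W) (hW : ∀ (g : G) (x : X), g • x ∈ W ↔ x ∈ W)
    (Dm : ℕ → Set X) (hDm : ∀ n, MeasurableSet (Dm n)) (hDW : ∀ n, W ⊆ sat G (Dm n))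
    (hD0 : Filter.Tendsto (fun n => μ (Dm n)) Filter.atTop (nhds 0))
    {p : X → ℕ} (hp : Measurable p) (hfin : ∫⁻ x, hd F μ p x ∂μ ≠ ⊤) {ε : ℝ} (hε : 0 < ε) :
    ∃ r : X → ℕ, Measurable r ∧
      ∫⁻ x, hd m μ r x ∂μ ≤ ∫⁻ x in W, hd m' μ p x ∂μ + ENNReal.ofReal ε ∧
      ∀ M : MeasurableSpace X, InvariantAlg G M → (∀ i, MeasurableSet[M] (r ⁻¹' {i} ∩ W)) →
        (∀ A, MeasurableSet[m'] A → MeasurableSet[M] (A ∩ W)) →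
        (∀ A, μ A = 0 → MeasurableSet[M] A) → ∀ i, MeasurableSet[M] (p ⁻¹' {i} ∩ W) := by
  classical
  have hWX : MeasurableSet W := hm' _ hWm'
  set e1 := ε / 7 with he1
  have he1p : 0 < e1 := by positivity
  obtain ⟨N, hN⟩ := tail_small F μ (hFm.trans hm) hp hfin (ENNReal.ofReal_pos.2 he1p)
  set p' : X → Fin (N + 1) := fun x => ⟨min (p x) N, by omega⟩ with hp'
  have hp'e : ∀ x, p x ≤ N → (p' x : ℕ) = p x := fun x h => by simp [hp', h]
  have hp'm : ∀ a, MeasurableSet (p' ⁻¹' {a}) := by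
    intro a
    have : p' ⁻¹' {a} = p ⁻¹' {i | min i N = a} := by
      ext x; simp [hp', Fin.ext_iff]
    rw [this]; exact hp (MeasurableSet.of_discrete)
  obtain ⟨Kg, D, κ, hDm', hDd, hDae, hκ0, hκ1, hgrid⟩ := grid m' μ hm' hp N p' hp'e he1p
  have hJ : 0 < Fintype.card (Fin (N + 1) → Fin (Kg + 1)) := Fintype.card_pos
  set e := e1 / Fintype.card (Fin (N + 1) → Fin (Kg + 1)) with he
  have hep : 0 < e := by positivity
  set s := Real.exp (-e) with hs
  have hs0 : 0 < s := Real.exp_pos _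
  have hs1 : s < 1 := by rw [hs, Real.exp_lt_one_iff]; linarith
  have hls : -Real.log s = e := by rw [hs, Real.log_exp]; ring
  set η := 1 - s with hη
  have hls2 : -Real.log (1 - η) = e := by rw [hη, sub_sub_cancel, hls]
  set L := ENNReal.ofReal (-Real.log (η * (1 - s))) with hL
  obtain ⟨δ2, hδ2, hsm2⟩ := small_ent 1 he1p
  obtain ⟨δ3, hδ3, hsm3⟩ := small_ent (N + 1) he1p
  -- choose the marker
  have hLT : Filter.Tendsto (fun n => L * μ (Dm n)) Filter.atTop (nhds 0) := by
    have := ENNReal.Tendsto.const_mul (a := L) hD0 (Or.inr ENNReal.ofReal_ne_top)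
    simpa using this
  obtain ⟨n0, hn1, hn2⟩ := ((hLT.eventually (ge_mem_nhds (ENNReal.ofReal_pos.2 hep))).and
    (hD0.eventually (ge_mem_nhds (ENNReal.ofReal_pos.2 hδ2)))).exists
  set C := Dm n0 ∩ W with hC
  have hCm : MeasurableSet C := (hDm n0).inter hWX
  have hCle : μ C ≤ μ (Dm n0) := measure_mono inter_subset_left
  obtain ⟨g, hg⟩ := exists_surjective_nat G
  set A : ℕ → Set X := disjointed (fun n => (fun x => g n • x) ⁻¹' C) with hA
  have hAm : ∀ n, MeasurableSet (A n) := fun n =>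
    MeasurableSet.disjointed (fun k => (hpmp (g k)).measurable hCm) n
  have hAd : Pairwise (Function.onFun Disjoint A) := disjoint_disjointed _
  have hAC : ∀ n, ∀ x ∈ A n, g n • x ∈ C := fun n x hx => disjointed_subset _ n hx
  have hAU : W ⊆ ⋃ n, A n := by
    intro x hx
    rw [hA, iUnion_disjointed]
    obtain ⟨h, hh⟩ := hDW n0 hx
    obtain ⟨k, rfl⟩ := hg h
    exact mem_iUnion.2 ⟨k, hh, (hW _ _).2 hx⟩
  -- choose the length
  set E : ℕ → Set X := fun K => W \ ⋃ n ∈ Finset.range K, A n with hE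
  have hEm : ∀ K, MeasurableSet (E K) := fun K =>
    hWX.diff (Finset.measurableSet_biUnion _ fun n _ => hAm n)
  have hET : Filter.Tendsto (fun K => μ (E K)) Filter.atTop (nhds 0) := by
    have hanti : Antitone E := by
      intro K K' h x hx
      refine ⟨hx.1, fun h' => hx.2 ?_⟩
      simp only [mem_iUnion, Finset.mem_range, exists_prop] at h' ⊢
      obtain ⟨n, hn, hxn⟩ := h'
      exact ⟨n, by omega, hxn⟩
    have hemp : ⋂ K, E K = ∅ := by
      ext x
      simp only [mem_iInter, mem_empty_iff_false, iff_false]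
      intro h
      obtain ⟨n, hn⟩ := mem_iUnion.1 (hAU (h 0).1)
      refine (h (n + 1)).2 ?_
      simp only [mem_iUnion, Finset.mem_range, exists_prop]
      exact ⟨n, by omega, hn⟩
    have := tendsto_measure_iInter_atTop (μ := μ) (fun n => (hEm n).nullMeasurableSet) hanti
      ⟨0, measure_ne_top _ _⟩
    rw [hemp, measure_empty] at this
    exact this
  obtain ⟨K, hK⟩ := (hET.eventually (ge_mem_nhds (ENNReal.ofReal_pos.2 hδ3))).exists
  set T : X → ℕ := fun x => if x ∈ E K ∩ {x | p x ≤ N} then p x + 1 else 0 with hT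
  have hpN : MeasurableSet {x | p x ≤ N} := hp measurableSet_Iic
  have hTm : Measurable T := Measurable.ite ((hEm K).inter hpN) (hp.add_const 1) measurable_const
  have hTent : Hf μ T ≤ ENNReal.ofReal e1 := by
    refine hsm3 μ T hTm (fun x => ?_) ?_
    · simp only [hT]
      split_ifs with h
      · have : p x ≤ N := h.2
        omega
      · omega
    · refine le_trans (measureReal_mono (s₂ := E K) ?_) (ENNReal.toReal_le_of_le_ofReal hδ3.le hK)
      intro x hx
      simp only [hT, mem_setOf_eq, ne_eq, ite_eq_right_iff, not_forall] at hx
      exact hx.1.1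
  have hCent : Hf μ (ind C) ≤ ENNReal.ofReal e1 := by
    refine hsm2 μ (ind C) (ind_meas hCm) (fun x => ?_) ?_
    · by_cases h : x ∈ C <;> simp [ind, h]
    · refine le_trans (measureReal_mono (s₂ := C) ?_)
        (ENNReal.toReal_le_of_le_ofReal hδ2.le (hCle.trans hn2))
      intro x hx
      by_contra h
      simp [ind, h] at hx
  -- lists
  set B : (Fin (N + 1) → Fin (Kg + 1)) → ℕ → Set X := fun j n => A n ∩ (D j ∩ W ∩ {x | p x ≤ N}) with hB
  have hDX : ∀ j, MeasurableSet (D j) := fun j => hm' _ (hDm' j)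
  have hBm : ∀ j n, MeasurableSet (B j n) := fun j n =>
    (hAm n).inter (((hDX j).inter hWX).inter hpN)
  set v : (Fin (N + 1) → Fin (Kg + 1)) → ℕ → X → Option (Fin (N + 1)) := fun j n c =>
    if (g n)⁻¹ • c ∈ B j n then some (p' ((g n)⁻¹ • c)) else none with hv
  have hv1 : ∀ j n x, x ∈ B j n → v j n (g n • x) = some (p' x) := by
    intro j n x hx; simp only [hv, inv_smul_smul]; rw [if_pos hx]
  have hv0 : ∀ j n x, x ∉ B j n → v j n (g n • x) = none := by
    intro j n x hx; simp only [hv, inv_smul_smul]; rw [if_neg hx]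
  have hcod := fun j => coding μ hpmp (hκ0 j) (hκ1 j) hs0 hs1 (η := η) (by linarith) (by linarith)
    g (B j) (hBm j) (fun a b hab => (hAd hab).mono inter_subset_left inter_subset_left)
    (D j ∩ W ∩ {x | p x ≤ N}) (fun n => inter_subset_right) p' hp'm hCm
    (fun n x hx => hAC n x hx.1) (v j) (hv1 j) (hv0 j) K
  set R : (Fin (N + 1) → Fin (Kg + 1)) → X → List (Fin (N + 1)) := fun j x => (List.range K).filterMap (v j · x) with hR
  have hRm : ∀ j l, MeasurableSet (R j ⁻¹' {l}) := fun j => (hcod j).1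
  have hRent : ∀ j, Hf μ (R j) ≤ 3 * ENNReal.ofReal e +
      ∫⁻ x in D j ∩ W ∩ {x | p x ≤ N}, ENNReal.ofReal (-Real.log (κ j (p' x))) ∂μ := by
    intro j
    refine (hcod j).2.trans ?_
    rw [lintegral_add_left measurable_const, setLIntegral_const, hls, hls2, ← add_assoc]
    gcongr
    have h1 : ENNReal.ofReal e * μ (D j ∩ W ∩ {x | p x ≤ N}) ≤ ENNReal.ofReal e * 1 := by
      gcongr; exact prob_le_one
    have h2 : L * μ C ≤ ENNReal.ofReal e := le_trans (by gcongr) hn1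
    calc _ ≤ ENNReal.ofReal e + ENNReal.ofReal e + ENNReal.ofReal e * 1 := by gcongr
      _ = _ := by ring
  have hRpi : Hf μ (fun x j => R j x) ≤ ∫⁻ x in W, hd m' μ p x ∂μ + 4 * ENNReal.ofReal e1 := by
    refine (Hf_pi μ [] hRm).trans ((Finset.sum_le_sum fun j _ => hRent j).trans ?_)
    rw [Finset.sum_add_distrib]
    have h1 : ∑ j : (Fin (N + 1) → Fin (Kg + 1)), 3 * ENNReal.ofReal e = 3 * ENNReal.ofReal e1 := by
      rw [← Finset.mul_sum, Finset.sum_const, Finset.card_univ, nsmul_eq_mul,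
        ← ENNReal.ofReal_natCast, ← ENNReal.ofReal_mul (by positivity)]
      congr 2
      rw [he]; field_simp
    rw [h1]
    calc _ ≤ 3 * ENNReal.ofReal e1 + (∫⁻ x in W, hd m' μ p x ∂μ + ENNReal.ofReal e1) := by
          gcongr; exact hgrid W hWm'
      _ = _ := by ring
  -- the code
  set rest : X → (ℕ × ℕ) × (ℕ × ((Fin (N + 1) → Fin (Kg + 1)) → List (Fin (N + 1)))) :=
    fun x => ((ind C x, (tl N ∘ p) x), (T x, fun j => R j x)) with hrest
  obtain ⟨enc, henc⟩ := exists_injective_nat ((ℕ × ℕ) × (ℕ × ((Fin (N + 1) → Fin (Kg + 1)) → List (Fin (N + 1)))))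
  have hf1 : ∀ i, MeasurableSet (ind C ⁻¹' {i}) := fun i => ind_meas hCm (measurableSet_singleton i)
  have hSm : Measurable (tl N ∘ p) := measurable_from_top.comp hp
  have hf2 : ∀ i, MeasurableSet ((tl N ∘ p) ⁻¹' {i}) := fun i => hSm (measurableSet_singleton i)
  have hf3 : ∀ i, MeasurableSet (T ⁻¹' {i}) := fun i => hTm (measurableSet_singleton i)
  have hf4 := pre_pi_meas hRm
  have hf12 := pre_pair_meas hf1 hf2
  have hf34 := pre_pair_meas hf3 hf4
  have hf := pre_pair_meas hf12 hf34
  refine ⟨enc ∘ rest, ?_, ?_, ?_⟩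
  · refine measurable_to_countable' fun i => ?_
    have : (enc ∘ rest) ⁻¹' {i} = ⋃ y ∈ {y | enc y = i}, rest ⁻¹' {y} := by ext x; simp
    rw [this]
    exact MeasurableSet.biUnion (to_countable _) fun y _ => hf y
  · have h0 : ∀ x, hd m μ (enc ∘ rest) x = hd m μ rest x := hd_inj m μ rest henc
    rw [lintegral_congr h0]
    calc ∫⁻ x, hd m μ rest x ∂μ ≤ (∫⁻ x, hd m μ (ind C) x ∂μ + ∫⁻ x, hd m μ (tl N ∘ p) x ∂μ) +
          (∫⁻ x, hd m μ T x ∂μ + ∫⁻ x, hd m μ (fun x j => R j x) x ∂μ) := by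
          refine (lint_pair m μ hm hf12 hf34).trans ?_
          gcongr
          · exact lint_pair m μ hm hf1 hf2
          · exact lint_pair m μ hm hf3 hf4
      _ ≤ (ENNReal.ofReal e1 + ENNReal.ofReal e1) + (ENNReal.ofReal e1 +
          (∫⁻ x in W, hd m' μ p x ∂μ + 4 * ENNReal.ofReal e1)) := by
          gcongr
          · exact (entropy_le_Hf m μ hm hf1).trans hCent
          · exact (entropy_mono μ hFm hm hf2).trans hN
          · exact (entropy_le_Hf m μ hm hf3).trans hTent
          · exact (entropy_le_Hf m μ hm hf4).trans hRpi
      _ = ∫⁻ x in W, hd m' μ p x ∂μ + 7 * ENNReal.ofReal e1 := by ring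
      _ = _ := by
          congr 1
          rw [show (7 : ℝ≥0∞) = ENNReal.ofReal 7 by simp, ← ENNReal.ofReal_mul (by norm_num), he1]
          congr 1; ring
  · have hO : μ {x | ∀ j, x ∉ D j} = 0 := by
      rw [measure_eq_zero_iff_ae_notMem]
      filter_upwards [hDae] with x hx h
      obtain ⟨j, hj⟩ := hx
      exact h j hj
    have hO' : ∀ O ⊆ {x | ∀ j, x ∉ D j}, μ O = 0 := fun O h => measure_mono_null h hO
    have hCW : C = rest ⁻¹' {y | y.1.1 = 1} ∩ W := by
      ext x
      simp only [hrest, mem_inter_iff, mem_preimage, mem_setOf_eq]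
      constructor
      · intro h; exact ⟨by simp [ind, h], h.2⟩
      · rintro ⟨h1, h2⟩; by_contra h; simp [ind, h] at h1
    have hT1 : ∀ x ∈ W, (∀ n < K, x ∉ A n) → p x ≤ N → T x = p x + 1 := by
      intro x hx hn hpx
      simp only [hT]
      rw [if_pos]
      refine ⟨⟨hx, ?_⟩, hpx⟩
      simp only [mem_iUnion, Finset.mem_range, exists_prop]
      rintro ⟨n, h1, h2⟩
      exact hn n h1 h2
    have hT0 : ∀ x, T x = 0 ∨ T x = p x + 1 := by
      intro x; simp only [hT]; split_ifs <;> simp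
    have hfib : ∀ y, rest ⁻¹' {y} = (enc ∘ rest) ⁻¹' {enc y} := by
      intro y; ext x; simp [henc.eq_iff]
    intro M hM hr hMm' hMnull
    have hrest' := code_fiber (M := M) (W := W) rest (fun y => by rw [hfib]; exact hr _)
    refine wdecode (M := M) hM hW g (C := C) (by rw [hCW]; exact hrest' _) D
      (fun j => hMm' _ (hDm' j)) p N K p' hp'e A hA (fun i => hrest' {y | y.1.2 = i}) T hT1 hT0
      (fun i => hrest' {y | y.2.1 = i}) B (fun _ _ => rfl) v hv1 hv0
      (fun j l => hrest' {y | y.2.2 j = l}) (fun O h => hMnull O (hO' O h))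

/-! ### assembly -/

lemma zpart {G X : Type*} (F m m' : MeasurableSpace X) [Group G] [Countable G]
    [mX : MeasurableSpace X] [StandardBorelSpace X] [MulAction G X] (μ : Measure X)
    [IsProbabilityMeasure μ] (hpmp : IsPmp G μ) (hm : InvariantAlg G m) (hFm : F ≤ m)
    (hI : invSigma G X ≤ m) (hmm : m ≤ m') (hm' : m' ≤ mX) (a p : X → ℕ) (Q : ℕ → Set X)
    (hm'e : m' = MeasurableSpace.generateFrom (Set.range Q) ⊔ F ⊔ invSigma G X)
    (ha : Measurable a) (hp : Measurable p)
    (hQ : SubsetMod (sigmaG G (Set.range fun i => a ⁻¹' {i}) ⊔ F ⊔ invSigma G X) μ (Set.range Q))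
    {Z : Set X} (hZm : MeasurableSet[m] Z) (hZ : ∀ (g : G) (x : X), g • x ∈ Z ↔ x ∈ Z)
    (hZ0 : ∀ x ∈ Z, hd m μ a x = 0) :
    ∀ᵐ x ∂μ, x ∈ Z → hd m μ p x = hd m' μ p x := by
  have hmX := hmm.trans hm'
  have hα : ∀ i, MeasurableSet[emS m μ] (a ⁻¹' {i} ∩ Z) := by
    intro i
    refine det_on m μ hmX hZm (ha (measurableSet_singleton i)) ?_
    filter_upwards [cp_mem m μ hmX (ha (measurableSet_singleton i))] with x hx hxZ
    have h0 := hZ0 x hxZ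
    unfold hd at h0
    have h1 := ENNReal.tsum_eq_zero.1 h0 i
    rw [ENNReal.ofReal_eq_zero] at h1
    have h2 := le_antisymm h1 (Real.negMulLog_nonneg hx.1 hx.2)
    rw [Real.negMulLog_def] at h2
    simp only [neg_eq_zero, mul_eq_zero, neg_mul] at h2
    rcases h2 with h2 | h2
    · exact Or.inl h2
    · rcases Real.log_eq_zero.1 h2 with h | h | h
      · exact Or.inl h
      · exact Or.inr h
      · linarith [hx.1]
  have hl := lift_alg m F μ hpmp hm hFm hI hZm hZ (fun i => a ⁻¹' {i}) Q hα hQ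
  rw [← hm'e] at hl
  have : ∀ᵐ x ∂μ, ∀ i, x ∈ Z → cp m μ (p ⁻¹' {i}) x = cp m' μ (p ⁻¹' {i}) x :=
    ae_all_iff.2 fun i => cp_eq_on m m' μ hmm hm' hZm (hp (measurableSet_singleton i)) hl
  filter_upwards [this] with x hx hxZ
  unfold hd
  simp only [fun i => hx i hxZ]

open Classical in
/-- the combined code -/
noncomputable def bcode {X : Type*} (Z Y C : Set X) (p a r : X → ℕ) : X → ℕ :=
  fun x => if x ∈ Z then p x else if x ∈ Y then ind C x else Nat.pair (a x) (r x)

lemma bcode_meas {X : Type*} [mX : MeasurableSpace X] {Z Y C : Set X} {p a r : X → ℕ}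
    (hZ : MeasurableSet Z) (hY : MeasurableSet Y) (hC : MeasurableSet C) (hp : Measurable p)
    (ha : Measurable a) (hr : Measurable r) : Measurable (bcode Z Y C p a r) := by
  unfold bcode
  refine Measurable.ite hZ hp (Measurable.ite hY (ind_meas hC) ?_)
  exact (Measurable.of_discrete (f := fun y : ℕ × ℕ => Nat.pair y.1 y.2)).comp (ha.prodMk hr)

lemma bcost {X : Type*} (m m' : MeasurableSpace X)
    [mX : MeasurableSpace X] [StandardBorelSpace X] (μ : Measure X)
    [IsProbabilityMeasure μ] (hmX : m ≤ mX) (hm' : m' ≤ mX)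
    {Z Y W C : Set X} {p a r : X → ℕ} (hZ : MeasurableSet[m] Z) (hY : MeasurableSet[m] Y)
    (hW : MeasurableSet[m] W) (hC : MeasurableSet C) (hp : Measurable p)
    (ha : Measurable a) (hr : Measurable r)
    (hZY : Disjoint Z Y) (hWe : W = (Z ∪ Y)ᶜ)
    (hz : ∀ᵐ x ∂μ, x ∈ Z → hd m μ p x = hd m' μ p x)
    (hy : ∀ᵐ x ∂μ, hd m μ (ind C) x ≤ hd m μ a x) {c : ℝ≥0∞}
    (hrc : ∫⁻ x, hd m μ r x ∂μ ≤ ∫⁻ x in W, hd m' μ p x ∂μ + c) :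
    ∫⁻ x, hd m μ (bcode Z Y C p a r) x ∂μ ≤ ∫⁻ x, hd m μ a x ∂μ + ∫⁻ x, hd m' μ p x ∂μ + c := by
  have sing : ∀ {f : X → ℕ}, Measurable f → ∀ i, MeasurableSet (f ⁻¹' {i}) :=
    fun hf i => hf (measurableSet_singleton i)
  have hbm := bcode_meas (hmX _ hZ) (hmX _ hY) hC hp ha hr
  have hpairm : Measurable (fun x => Nat.pair (a x) (r x)) :=
    (Measurable.of_discrete (f := fun y : ℕ × ℕ => Nat.pair y.1 y.2)).comp (ha.prodMk hr)
  have l1 := hd_local m μ (b := p) hZ (sing hbm) (sing hp) (fun x hx => by simp [bcode, hx])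
  have l2 := hd_local m μ (b := ind C) hY (sing hbm) (sing (ind_meas hC))
    (fun x hx => by simp [bcode, hx, hZY.notMem_of_mem_right hx])
  have l3 := hd_local m μ (b := fun x => Nat.pair (a x) (r x)) hW (sing hbm) (sing hpairm)
    (fun x hx => by
      rw [hWe] at hx
      have h1 : x ∉ Z := fun h => hx (Or.inl h)
      have h2 : x ∉ Y := fun h => hx (Or.inr h)
      simp [bcode, h1, h2])
  have hinj : Injective (fun y : ℕ × ℕ => Nat.pair y.1 y.2) := by
    rintro ⟨a, b⟩ ⟨c, d⟩ h
    simpa [Nat.pair_eq_pair] using h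
  have l4 : ∀ x, hd m μ (fun x => Nat.pair (a x) (r x)) x = hd m μ (fun x => (a x, r x)) x :=
    hd_inj m μ (fun x => (a x, r x)) hinj
  have key : ∀ᵐ x ∂μ, hd m μ (bcode Z Y C p a r) x ≤
      (hd m μ a x + Z.indicator (hd m' μ p) x) + hd m μ r x := by
    filter_upwards [l1, l2, l3, hz, hy, hd_pair m μ hmX (sing ha) (sing hr)]
      with x l1 l2 l3 hz hy hpair
    by_cases h1 : x ∈ Z
    · rw [l1 h1, hz h1, indicator_of_mem h1]
      exact le_add_right le_add_self
    · by_cases h2 : x ∈ Y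
      · rw [l2 h2]
        exact hy.trans (le_add_right le_self_add)
      · rw [l3 (by rw [hWe]; simp [h1, h2]), l4, indicator_of_notMem h1, add_zero]
        exact hpair
  calc _ ≤ ∫⁻ x, (hd m μ a x + Z.indicator (hd m' μ p) x) + hd m μ r x ∂μ := lintegral_mono_ae key
    _ = ∫⁻ x, hd m μ a x ∂μ + ∫⁻ x in Z, hd m' μ p x ∂μ + ∫⁻ x, hd m μ r x ∂μ := by
        rw [lintegral_add_right _ (hd_measurable m μ hmX r),
          lintegral_add_left (hd_measurable m μ hmX a), lintegral_indicator (hmX _ hZ)]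
    _ ≤ ∫⁻ x, hd m μ a x ∂μ + ∫⁻ x in Z, hd m' μ p x ∂μ +
        (∫⁻ x in W, hd m' μ p x ∂μ + c) := by gcongr
    _ = ∫⁻ x, hd m μ a x ∂μ + (∫⁻ x in Z ∪ W, hd m' μ p x ∂μ) + c := by
        rw [lintegral_union (hmX _ hW) (by
          rw [hWe]; exact disjoint_compl_right.mono_left subset_union_left)]
        ring
    _ ≤ _ := by gcongr; exact Measure.restrict_le_self

lemma bdecode {G X : Type*} (F m' n : MeasurableSpace X) [Group G] [Countable G]
    [mX : MeasurableSpace X] [StandardBorelSpace X] [MulAction G X] (μ : Measure X)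
    [IsProbabilityMeasure μ] (hpmp : IsPmp G μ) (hn : InvariantAlg G n) (hFn : F ≤ n)
    (hI : invSigma G X ≤ n) (a p r : X → ℕ) (Q : ℕ → Set X)
    (hm'e : m' = MeasurableSpace.generateFrom (Set.range Q) ⊔ F ⊔ invSigma G X)
    (hp : Measurable p)
    (hQ : SubsetMod (sigmaG G (Set.range fun i => a ⁻¹' {i}) ⊔ F ⊔ invSigma G X) μ (Set.range Q))
    {Z C W : Set X} (hZ : MeasurableSet[n] Z) (hY : MeasurableSet[n] (sat G C))
    (hW : MeasurableSet[n] W) (hWi : ∀ (g : G) (x : X), g • x ∈ W ↔ x ∈ W)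
    (hC : MeasurableSet C)
    (hone : ∀ x ∈ C, ∀ g : G, g • x ∈ C → g • x = x)
    (hZY : Disjoint Z (sat G C)) (hWe : W = (Z ∪ sat G C)ᶜ)
    (hb : ∀ i, MeasurableSet[n] (bcode Z (sat G C) C p a r ⁻¹' {i}))
    (hr : ∀ M : MeasurableSpace X, InvariantAlg G M → (∀ i, MeasurableSet[M] (r ⁻¹' {i} ∩ W)) →
        (∀ A, MeasurableSet[m'] A → MeasurableSet[M] (A ∩ W)) →
        (∀ A, μ A = 0 → MeasurableSet[M] A) → ∀ i, MeasurableSet[M] (p ⁻¹' {i} ∩ W)) (i : ℕ) :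
    ∃ B, MeasurableSet[n] B ∧ μ ((p ⁻¹' {i}) ∆ B) = 0 := by
  have up : ∀ {A : Set X}, MeasurableSet[n] A → MeasurableSet[emS n μ] A :=
    fun h => le_eventuallyMeasurableSpace _ h
  have hbW : ∀ x ∈ W, bcode Z (sat G C) C p a r x = Nat.pair (a x) (r x) := by
    intro x hx
    rw [hWe] at hx
    have h1 : x ∉ Z := fun h => hx (Or.inl h)
    have h2 : x ∉ sat G C := fun h => hx (Or.inr h)
    simp [bcode, h1, h2]
  have hb' := code_fiber (M := n) (W := W) _ (fun i => MeasurableSet.inter (hb i) hW)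
  have hα : ∀ i, MeasurableSet[n] (a ⁻¹' {i} ∩ W) := by
    intro i
    have : a ⁻¹' {i} ∩ W = bcode Z (sat G C) C p a r ⁻¹' {k | k.unpair.1 = i} ∩ W := by
      ext x
      simp only [mem_inter_iff, mem_preimage, mem_singleton_iff, mem_setOf_eq, and_congr_left_iff]
      intro hx; rw [hbW x hx]; simp
    rw [this]; exact hb' _
  have hρ : ∀ i, MeasurableSet[n] (r ⁻¹' {i} ∩ W) := by
    intro i
    have : r ⁻¹' {i} ∩ W = bcode Z (sat G C) C p a r ⁻¹' {k | k.unpair.2 = i} ∩ W := by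
      ext x
      simp only [mem_inter_iff, mem_preimage, mem_singleton_iff, mem_setOf_eq, and_congr_left_iff]
      intro hx; rw [hbW x hx]; simp
    rw [this]; exact hb' _
  have hl := lift_alg n F μ hpmp hn hFn hI hW hWi (fun i => a ⁻¹' {i}) Q (fun i => up (hα i)) hQ
  rw [← hm'e] at hl
  have hWp := hr (emS n μ) (inv_em n μ hpmp hn) (fun i => up (hρ i)) hl
    (fun A hA => ⟨∅, @MeasurableSet.empty _ n, ae_eq_empty.2 hA⟩) i
  have hZp : MeasurableSet[n] (p ⁻¹' {i} ∩ Z) := by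
    have : p ⁻¹' {i} ∩ Z = bcode Z (sat G C) C p a r ⁻¹' {i} ∩ Z := by
      ext x
      simp only [mem_inter_iff, mem_preimage, mem_singleton_iff, and_congr_left_iff]
      intro hx; simp [bcode, hx]
    rw [this]; exact MeasurableSet.inter (hb i) hZ
  have hCn : MeasurableSet[n] C := by
    have : C = bcode Z (sat G C) C p a r ⁻¹' {1} ∩ sat G C := by
      ext x
      simp only [mem_inter_iff, mem_preimage, mem_singleton_iff]
      constructor
      · intro hx
        have h2 : x ∈ sat G C := subset_sat C hx
        refine ⟨?_, h2⟩
        simp [bcode, h2, hZY.notMem_of_mem_right h2, ind, hx]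
      · rintro ⟨h1, h2⟩
        by_contra hx
        simp [bcode, h2, hZY.notMem_of_mem_right h2, ind, hx] at h1
    rw [this]; exact MeasurableSet.inter (hb 1) hY
  have hYp := decodeY n μ hpmp hn hI hC hCn hone hp i
  have htot : MeasurableSet[emS n μ] (p ⁻¹' {i}) := by
    have : p ⁻¹' {i} = (p ⁻¹' {i} ∩ Z) ∪ (p ⁻¹' {i} ∩ sat G C) ∪ (p ⁻¹' {i} ∩ W) := by
      rw [← inter_union_distrib_left, ← inter_union_distrib_left, hWe, union_compl_self, inter_univ]
    rw [this]
    exact MeasurableSet.union (MeasurableSet.union (up hZp) (up hYp)) hWp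
  obtain ⟨B, hB, hAB⟩ := htot
  exact ⟨B, hB, measure_symmDiff_eq_zero_iff.2 hAB⟩

lemma onesided {G X : Type*} (F : MeasurableSpace X) [Group G] [Countable G]
    [mX : MeasurableSpace X] [StandardBorelSpace X] [MulAction G X]
    (μ : Measure X) [IsProbabilityMeasure μ] (hpmp : IsPmp G μ)
    (hF : F ≤ mX) (hFinv : InvariantAlg G F) (p a : X → ℕ) (hp : Measurable p) (ha : Measurable a)
    (Q : ℕ → Set X) (hQm : ∀ i, MeasurableSet (Q i))
    (hQ : SubsetMod (sigmaG G (Set.range fun i => a ⁻¹' {i}) ⊔ F ⊔ invSigma G X) μ (Set.range Q))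
    (hfin : ∫⁻ x, hd F μ p x ∂μ ≠ ⊤) {ε : ℝ} (hε : 0 < ε) :
    ∃ b : X → ℕ, Measurable b ∧
      SubsetMod (sigmaG G (Set.range fun i => b ⁻¹' {i}) ⊔ F ⊔ invSigma G X) μ
        (Set.range fun i => p ⁻¹' {i}) ∧
      ∫⁻ x, hd (F ⊔ invSigma G X) μ b x ∂μ ≤ ∫⁻ x, hd (F ⊔ invSigma G X) μ a x ∂μ +
        ∫⁻ x, hd (MeasurableSpace.generateFrom (Set.range Q) ⊔ F) μ p x ∂μ + ENNReal.ofReal ε := by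
  have hIX : invSigma G X ≤ mX := invSigma_le
  have hmX : F ⊔ invSigma G X ≤ mX := sup_le hF hIX
  have hQF : MeasurableSpace.generateFrom (Set.range Q) ⊔ F ≤ mX :=
    sup_le (MeasurableSpace.generateFrom_le (by rintro _ ⟨i, rfl⟩; exact hQm i)) hF
  have hm'X : MeasurableSpace.generateFrom (Set.range Q) ⊔ F ⊔ invSigma G X ≤ mX :=
    sup_le hQF hIX
  have hmm : F ⊔ invSigma G X ≤ MeasurableSpace.generateFrom (Set.range Q) ⊔ F ⊔ invSigma G X :=
    sup_le_sup_right le_sup_right _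
  have hN : MeasurableSet {x | hd (F ⊔ invSigma G X) μ a x ≠ 0} :=
    (hd_measurable _ μ hmX a) (measurableSet_singleton (0 : ℝ≥0∞)).compl
  obtain ⟨C, Dm, hC, hDm, hCN, hone, hsat, hD0⟩ := markers μ hpmp hN
  have hNI := sat_mem μ hpmp hN
  have hYI := sat_mem μ hpmp hC
  have hYN : sat G C ⊆ sat G {x | hd (F ⊔ invSigma G X) μ a x ≠ 0} := by
    rintro x ⟨g, hg⟩; exact ⟨g, hCN hg⟩
  have hNi := sat_inv (G := G) {x | hd (F ⊔ invSigma G X) μ a x ≠ 0}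
  have hYi := sat_inv (G := G) C
  have hNs := subset_sat (G := G) {x | hd (F ⊔ invSigma G X) μ a x ≠ 0}
  generalize sat G {x | hd (F ⊔ invSigma G X) μ a x ≠ 0} = S at *
  have hZI : MeasurableSet[invSigma G X] Sᶜ := MeasurableSet.compl hNI
  have hWI : MeasurableSet[invSigma G X] (S \ sat G C) := MeasurableSet.diff hNI hYI
  have hWi : ∀ (g : G) (x : X), g • x ∈ S \ sat G C ↔ x ∈ S \ sat G C := by
    intro g x; simp only [mem_diff, hNi, hYi]
  have hZi : ∀ (g : G) (x : X), g • x ∈ Sᶜ ↔ x ∈ Sᶜ := by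
    intro g x; simp only [mem_compl_iff, hNi]
  have hWe : S \ sat G C = (Sᶜ ∪ sat G C)ᶜ := by
    ext x; simp
  have hZY : Disjoint Sᶜ (sat G C) := disjoint_compl_left.mono_right hYN
  obtain ⟨r, hr, hrc, hrd⟩ := wpart F (F ⊔ invSigma G X)
    (MeasurableSpace.generateFrom (Set.range Q) ⊔ F ⊔ invSigma G X) μ hpmp le_sup_left hmX hm'X
    ((le_sup_right : invSigma G X ≤ _) _ hWI) hWi Dm hDm (fun n x hx => hsat x hx.1 hx.2 n) hD0 hp
    hfin hε
  have hbm : Measurable (bcode Sᶜ (sat G C) C p a r) :=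
    bcode_meas (hIX _ hZI) (hIX _ hYI) hC hp ha hr
  refine ⟨bcode Sᶜ (sat G C) C p a r, hbm, ?_, ?_⟩
  · rintro _ ⟨i, rfl⟩
    have hIn : invSigma G X ≤ sigmaG G (Set.range fun i => bcode Sᶜ (sat G C) C p a r ⁻¹' {i}) ⊔
      F ⊔ invSigma G X := le_sup_right
    refine bdecode F _ _ μ hpmp (invAlg_sup (invAlg_sup (inv_sigmaG _) hFinv) inv_invSigma)
      (le_sup_of_le_left le_sup_right) hIn a p r Q rfl hp hQ (hIn _ hZI) (hIn _ hYI) (hIn _ hWI)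
      hWi hC hone hZY hWe (fun k => ?_) hrd i
    refine (le_sup_of_le_left le_sup_left :
      sigmaG G (Set.range fun i => bcode Sᶜ (sat G C) C p a r ⁻¹' {i}) ≤ _) _ ?_
    exact MeasurableSpace.measurableSet_generateFrom ⟨1, _, ⟨k, rfl⟩, by simp⟩
  · have hIm : invSigma G X ≤ F ⊔ invSigma G X := le_sup_right
    refine (bcost (F ⊔ invSigma G X) _ μ hmX hm'X (hIm _ hZI) (hIm _ hYI) (hIm _ hWI) hC hp ha hr
      hZY hWe ?_ ?_ hrc).trans ?_
    · refine zpart F _ _ μ hpmp (invAlg_sup hFinv inv_invSigma) le_sup_left hIm hmm hm'X a p Q rfl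
        ha hp hQ (hIm _ hZI) hZi ?_
      intro x hx
      by_contra h
      exact hx (hNs h)
    · exact hd_transversal _ μ hpmp hmX hIm hC ha hone (fun x hx => hCN hx)
    · exact add_le_add (add_le_add le_rfl (entropy_mono μ le_sup_left hm'X
        (fun i => hp (measurableSet_singleton i)))) le_rfl

lemma part_fun {X : Type*} [mX : MeasurableSpace X] {P : ℕ → Set X} (hP : IsPartition P) :
    ∃ p : X → ℕ, Measurable p ∧ P = fun i => p ⁻¹' {i} := by
  obtain ⟨h1, h2, h3⟩ := hP
  have : ∀ x, ∃ i, x ∈ P i := fun x => mem_iUnion.1 (h3 ▸ mem_univ x)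
  choose p hp using this
  have he : P = fun i => p ⁻¹' {i} := by
    funext i
    ext x
    simp only [mem_preimage, mem_singleton_iff]
    constructor
    · intro hx
      by_contra hne
      exact (h2 hne).notMem_of_mem_left (hp x) hx
    · rintro rfl; exact hp x
  refine ⟨p, measurable_to_countable' fun i => ?_, he⟩
  have := h1 i
  rw [he] at this; exact this

lemma fun_part {X : Type*} [mX : MeasurableSpace X] {p : X → ℕ} (hp : Measurable p) :
    IsPartition fun i => p ⁻¹' {i} := by
  refine ⟨fun i => hp (measurableSet_singleton i), fun i j hij => ?_, ?_⟩
  · refine Set.disjoint_left.2 fun x hx hy => hij ?_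
    exact (Set.mem_singleton_iff.1 hx).symm.trans hy
  · ext x; simp

lemma outer_le {G X : Type*} (F : MeasurableSpace X) [Group G] [Countable G]
    [mX : MeasurableSpace X] [StandardBorelSpace X] [MulAction G X]
    (μ : Measure X) [IsProbabilityMeasure μ] (hpmp : IsPmp G μ)
    (hF : F ≤ mX) (hFinv : InvariantAlg G F)
    (P Q : ℕ → Set X) (hP : IsPartition P) (hQ : IsPartition Q) (hPfin : condEnt F μ P < ⊤) :
    outerRokhlin G (Set.range P) F μ ≤
        outerRokhlin G (Set.range Q) F μ +
          condEnt (MeasurableSpace.generateFrom (Set.range Q) ⊔ F) μ P := by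
  obtain ⟨p, hp, rfl⟩ := part_fun hP
  rw [outerRokhlin.eq_1 G (Set.range Q), ENNReal.sInf_add]
  refine le_iInf₂ ?_
  rintro _ ⟨α, hα, hαQ, rfl⟩
  obtain ⟨a, ha, rfl⟩ := part_fun hα
  refine ENNReal.le_of_forall_pos_le_add fun ε hε _ => ?_
  obtain ⟨b, hb, hbP, hbc⟩ := onesided F μ hpmp hF hFinv p a hp ha Q hQ.1 hαQ hPfin.ne
    (ε := ε) (by exact_mod_cast hε)
  rw [ENNReal.ofReal_coe_nnreal] at hbc
  refine le_trans (sInf_le ⟨_, fun_part hb, hbP, rfl⟩) hbc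

/-- Lemma 5.2.(iii): `|rh(P|F) − rh(Q|F)| ≤ dR_μ(P, Q | F)`, stated as
the two corresponding one-sided inequalities in `[0,∞]`. -/
theorem statement12 {G X : Type*} (F : MeasurableSpace X) [Group G] [Countable G]
    [mX : MeasurableSpace X] [StandardBorelSpace X] [MulAction G X]
    (μ : Measure X) [IsProbabilityMeasure μ] (hpmp : IsPmp G μ)
    (hF : F ≤ mX) (hFinv : InvariantAlg G F)
    (P Q : ℕ → Set X) (hP : IsPartition P) (hQ : IsPartition Q)
    (hPfin : condEnt F μ P < ⊤) (hQfin : condEnt F μ Q < ⊤) :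
    outerRokhlin G (Set.range P) F μ ≤
        outerRokhlin G (Set.range Q) F μ +
          (condEnt (MeasurableSpace.generateFrom (Set.range Q) ⊔ F) μ P +
            condEnt (MeasurableSpace.generateFrom (Set.range P) ⊔ F) μ Q) ∧
      outerRokhlin G (Set.range Q) F μ ≤
        outerRokhlin G (Set.range P) F μ +
          (condEnt (MeasurableSpace.generateFrom (Set.range Q) ⊔ F) μ P +
            condEnt (MeasurableSpace.generateFrom (Set.range P) ⊔ F) μ Q) := by
  constructor
  · refine (outer_le F μ hpmp hF hFinv P Q hP hQ hPfin).trans ?_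
    gcongr
    exact le_self_add
  · refine (outer_le F μ hpmp hF hFinv Q P hQ hP hQfin).trans ?_
    gcongr
    exact le_add_self
end

section
/- Let G be a finitely generated infinite group, let L be a finite set, and let G act on L^G by left-shifts: (g·x)(h) = x(g⁻¹h). Let P ⊆ L^G be a finite G-invariant set. For every ε > 0 and every open set U ⊇ P there is a clopen set V with P ⊆ V ⊆ U such that rh_{G,μ}({V}) < ε for every G-invariant Borel probability measure μ on L^G. -/
open MeasureTheory Set Function
open scoped ENNReal symmDiff

/-- The left-shift action of `G` on `L^G = (G → L)`: `(g • x) h = x (g⁻¹ * h)`. -/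
instance shiftMulAction {G L : Type*} [Group G] : MulAction G (G → L) where
  smul g x := fun h => x (g⁻¹ * h)
  one_smul x := by funext h; show x (1⁻¹ * h) = x h; simp
  mul_smul g g' x := by
    funext h; show x ((g * g')⁻¹ * h) = x (g'⁻¹ * (g⁻¹ * h)); simp [mul_assoc]

theorem aux_negMulLog_le (x t : ℝ) (hx : 0 ≤ x) (ht : 0 < t) :
    Real.negMulLog x ≤ t + x * (-Real.log t) := by
  rcases hx.eq_or_lt with rfl | hx
  · simp [ht.le]
  · have h := Real.log_le_sub_one_of_pos (div_pos ht hx)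
    rw [Real.log_div ht.ne' hx.ne'] at h
    have h2 := mul_le_mul_of_nonneg_left h hx.le
    have h3 : x * (t / x - 1) = t - x := by field_simp
    rw [Real.negMulLog]
    nlinarith

theorem aux_negMulLog_le_one (x : ℝ) (hx : 0 ≤ x) : Real.negMulLog x ≤ 1 - x := by
  rcases hx.eq_or_lt with rfl | hx
  · simp
  · have h := Real.log_le_sub_one_of_pos (inv_pos.2 hx)
    rw [Real.log_inv] at h
    have h2 := mul_le_mul_of_nonneg_left h hx.le
    have h3 : x * (x⁻¹ - 1) = 1 - x := by field_simp
    rw [Real.negMulLog]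
    nlinarith

theorem aux_invSigma_le (G X : Type*) [Group G] [MulAction G X] [mX : MeasurableSpace X] :
    invSigma G X ≤ mX :=
  MeasurableSpace.generateFrom_le fun _ hA => hA.1

theorem aux_meas_smul (G : Type*) {X : Type*} [Group G] [MulAction G X] (ξ : Set (Set X)) (g : G)
    {A : Set X} (hA : MeasurableSet[sigmaG G ξ] A) :
    MeasurableSet[sigmaG G ξ] ((fun x => g • x) ⁻¹' A) := by
  have : @Measurable X X (sigmaG G ξ) (sigmaG G ξ) (fun x => g • x) := by
    refine @measurable_generateFrom X X (sigmaG G ξ) _ _ ?_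
    rintro B ⟨h, C, hC, rfl⟩
    refine MeasurableSpace.measurableSet_generateFrom ⟨h * g, C, hC, ?_⟩
    ext x; simp [mul_smul]
  exact this hA

/-- The three-piece partition. -/
def triPart {X : Type*} (A B : Set X) : ℕ → Set X
  | 0 => (A ∪ B)ᶜ
  | 1 => A
  | 2 => B
  | _ => ∅

theorem triPart_isPartition {X : Type*} [MeasurableSpace X] {A B : Set X}
    (hA : MeasurableSet A) (hB : MeasurableSet B) (hAB : Disjoint A B) :
    IsPartition (triPart A B) := by
  refine ⟨?_, ?_, ?_⟩
  · rintro (_ | _ | _ | i)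
    · exact (hA.union hB).compl
    · exact hA
    · exact hB
    · exact MeasurableSet.empty
  · have h1 : Disjoint (A ∪ B)ᶜ A := by
      rw [Set.disjoint_left]; intro x hx hx'; exact hx (Or.inl hx')
    have h2 : Disjoint (A ∪ B)ᶜ B := by
      rw [Set.disjoint_left]; intro x hx hx'; exact hx (Or.inr hx')
    rintro (_ | _ | _ | i) (_ | _ | _ | j) hij <;>
      first
        | exact absurd rfl hij
        | exact h1
        | exact h2
        | exact hAB
        | exact h1.symm
        | exact h2.symm
        | exact hAB.symm
        | exact Set.disjoint_empty _
        | exact Set.empty_disjoint _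
  · rw [Set.eq_univ_iff_forall]
    intro x
    rw [Set.mem_iUnion]
    by_cases h1 : x ∈ A
    · exact ⟨1, h1⟩
    by_cases h2 : x ∈ B
    · exact ⟨2, h2⟩
    · exact ⟨0, fun h => h.elim h1 h2⟩

theorem condEnt_triPart_le {X : Type*} (m : MeasurableSpace X) [mX : MeasurableSpace X]
    (hm : m ≤ mX) (μ : Measure X) [IsProbabilityMeasure μ] {A B : Set X}
    (hA : MeasurableSet A) (hB : MeasurableSet B) (hAB : Disjoint A B)
    (t : ℝ) (ht : 0 < t) (ht1 : t < 1) :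
    condEnt m μ (triPart A B) ≤
      ENNReal.ofReal (2 * t + μ.real (A ∪ B) * (1 - Real.log t)) := by
  have hpart := triPart_isPartition hA hB hAB
  have hlog : 0 ≤ -Real.log t := by
    have := Real.log_neg ht ht1; linarith
  set f : ℕ → X → ℝ := fun i => μ[(triPart A B i).indicator (fun _ => (1 : ℝ)) | m] with hf
  have hIntg : ∀ i, Integrable ((triPart A B i).indicator (fun _ => (1 : ℝ))) μ := fun i =>
    (integrable_const (1 : ℝ)).indicator (hpart.1 i)
  have hfint : ∀ i, Integrable (f i) μ := fun i => integrable_condExp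
  have hfi : ∀ i, ∫ x, f i x ∂μ = μ.real (triPart A B i) := by
    intro i
    have h := integral_condExp hm (μ := μ) (f := (triPart A B i).indicator (fun _ => (1 : ℝ)))
    refine h.trans ?_
    rw [integral_indicator (hpart.1 i)]
    simp
  have hpos : ∀ i, ∀ᵐ x ∂μ, 0 ≤ f i x := fun i => by
    have := condExp_nonneg (m := m) (μ := μ)
      (f := (triPart A B i).indicator (fun _ => (1 : ℝ)))
      (Filter.Eventually.of_forall fun x => Set.indicator_nonneg (fun _ _ => zero_le_one) x)
    filter_upwards [this] with x hx using hx
  have hle : ∀ᵐ x ∂μ, f 0 x ≤ 1 := by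
    have := condExp_mono (m := m) (μ := μ) (hIntg 0) (integrable_const (1 : ℝ))
      (Filter.Eventually.of_forall fun x => Set.indicator_le_self' (fun _ _ => zero_le_one) x)
    have hc : μ[(fun _ : X => (1 : ℝ)) | m] = fun _ => 1 := condExp_const hm 1
    filter_upwards [this] with x hx
    exact hx.trans_eq (congrFun hc x)
  have hzero : ∀ i x, f (i + 3) x = 0 := by
    intro i x
    have : (triPart A B (i + 3)).indicator (fun _ => (1 : ℝ)) = 0 := by
      simp [triPart]
      rfl
    rw [hf]; simp only [this, condExp_zero]; rfl
  set g : X → ℝ := fun x => (1 - f 0 x) + (t + f 1 x * (-Real.log t))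
    + (t + f 2 x * (-Real.log t)) with hg
  have e1 : Integrable (fun x => 1 - f 0 x) μ := (integrable_const (1 : ℝ)).sub (hfint 0)
  have e2 : Integrable (fun x => t + f 1 x * (-Real.log t)) μ := (integrable_const t).add ((hfint 1).mul_const (-Real.log t))
  have e3 : Integrable (fun x => t + f 2 x * (-Real.log t)) μ := (integrable_const t).add ((hfint 2).mul_const (-Real.log t))
  have hgint : Integrable g μ := (e1.add e2).add e3
  have hgval : ∫ x, g x ∂μ = 2 * t + μ.real (A ∪ B) * (1 - Real.log t) := by
    have hu : μ.real (A ∪ B) = μ.real A + μ.real B := measureReal_union hAB hB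
    have h0 : μ.real (triPart A B 0) = 1 - μ.real (A ∪ B) := probReal_compl_eq_one_sub (hA.union hB)
    have i1 : ∫ x, g x ∂μ = (∫ x, (1 - f 0 x) ∂μ) + (∫ x, (t + f 1 x * (-Real.log t)) ∂μ)
        + ∫ x, (t + f 2 x * (-Real.log t)) ∂μ := by
      rw [← integral_add e1 e2]
      exact integral_add (e1.add e2) e3
    rw [i1, integral_sub (integrable_const _) (hfint 0),
      integral_add (integrable_const _) ((hfint 1).mul_const _),
      integral_add (integrable_const _) ((hfint 2).mul_const _),
      integral_mul_const, integral_mul_const, hfi, hfi, hfi, h0]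
    simp only [integral_const, probReal_univ, smul_eq_mul, triPart]
    rw [hu]; ring
  have hgpos : 0 ≤ᵐ[μ] g := by
    filter_upwards [hpos 1, hpos 2, hle] with x h1 h2 h3
    have := mul_nonneg h1 hlog
    have := mul_nonneg h2 hlog
    simp only [hg, Pi.zero_apply]; linarith
  rw [← hgval, ofReal_integral_eq_lintegral_ofReal hgint hgpos]
  refine lintegral_mono_ae ?_
  filter_upwards [hpos 0, hpos 1, hpos 2, hle] with x h0 h1 h2 h3
  have hs : (∑' i, ENNReal.ofReal (Real.negMulLog (f i x)))
      = ∑ i ∈ Finset.range 3, ENNReal.ofReal (Real.negMulLog (f i x)) := by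
    refine tsum_eq_sum fun i hi => ?_
    obtain ⟨k, rfl⟩ : ∃ k, i = k + 3 := ⟨i - 3, by simp at hi; omega⟩
    simp [hzero]
  change (∑' i, ENNReal.ofReal (Real.negMulLog (f i x))) ≤ _
  have p1 := mul_nonneg h1 hlog
  have p2 := mul_nonneg h2 hlog
  rw [hs, Finset.sum_range_succ, Finset.sum_range_succ, Finset.sum_range_one, hg]
  simp only
  rw [ENNReal.ofReal_add (by linarith) (by linarith), ENNReal.ofReal_add (by linarith) (by linarith)]
  gcongr
  · exact aux_negMulLog_le_one _ h0
  · exact aux_negMulLog_le _ _ h1 ht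
  · exact aux_negMulLog_le _ _ h2 ht

/-- Iterated interior of a set with respect to a finite set of group elements. -/
def coreSeq {G X : Type*} [Group G] [MulAction G X] (S : Set G) (V : Set X) : ℕ → Set X
  | 0 => V
  | n + 1 => ⋂ s ∈ S, (fun x => s • x) ⁻¹' coreSeq S V n

theorem mem_coreSeq_succ {G X : Type*} [Group G] [MulAction G X] {S : Set G} {V : Set X}
    {n : ℕ} {x : X} : x ∈ coreSeq S V (n + 1) ↔ ∀ s ∈ S, s • x ∈ coreSeq S V n := by
  simp [coreSeq]

theorem coreSeq_anti {G X : Type*} [Group G] [MulAction G X] {S : Set G} (h1 : (1 : G) ∈ S)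
    (V : Set X) : Antitone (coreSeq S V) := by
  refine antitone_nat_of_succ_le fun n x hx => ?_
  simpa using mem_coreSeq_succ.1 hx 1 h1

/-- Recursive reconstruction sets. -/
def reach {G X : Type*} [Group G] [MulAction G X] (S : Set G) (A B : Set X) : ℕ → Set X
  | 0 => A
  | n + 1 => reach S A B n ∪ ((⋃ s ∈ S, (fun x => s • x) ⁻¹' reach S A B n) \ B)

theorem coreSeq_measurable {G X : Type*} [Group G] [MulAction G X] [mX : MeasurableSpace X]
    (hact : ∀ g : G, Measurable (fun x : X => g • x)) [Countable G]
    {S : Set G} (hS : S.Finite) (h1 : (1 : G) ∈ S)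
    (hinv : ∀ s ∈ S, s⁻¹ ∈ S) (hgen : Subgroup.closure S = ⊤) (V : Set X)
    (hV : ∀ n, MeasurableSet (coreSeq S V n)) (j : ℕ) (ξ : Set (Set X))
    (hA : coreSeq S V (j + 1) \ coreSeq S V (j + 2) ∈ ξ)
    (hB : coreSeq S V j \ coreSeq S V (j + 1) ∈ ξ) (k : ℕ) (hk : j + 1 ≤ k) :
    MeasurableSet[sigmaG G ξ ⊔ invSigma G X] (coreSeq S V k) := by
  set A := coreSeq S V (j + 1) \ coreSeq S V (j + 2) with hAdef
  set B := coreSeq S V j \ coreSeq S V (j + 1) with hBdef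
  set W := coreSeq S V (j + 1) with hW
  have hmem : ∀ C ∈ ξ, MeasurableSet[sigmaG G ξ] C := fun C hC =>
    MeasurableSpace.measurableSet_generateFrom ⟨1, C, hC, by simp⟩
  have hreach : ∀ n, MeasurableSet[sigmaG G ξ] (reach S A B n) := by
    intro n
    induction n with
    | zero => exact hmem _ hA
    | succ n ih =>
      refine MeasurableSet.union ih (MeasurableSet.diff ?_ (hmem _ hB))
      exact MeasurableSet.biUnion hS.countable fun s _ => aux_meas_smul G ξ s ih
  have hmono : Monotone (reach S A B) := monotone_nat_of_le_succ fun n x hx => Or.inl hx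
  have hsub : ∀ n, reach S A B n ⊆ W := by
    intro n
    induction n with
    | zero => exact fun x hx => hx.1
    | succ n ih =>
      rintro x (hx | ⟨hx, hxB⟩)
      · exact ih hx
      · simp only [Set.mem_iUnion] at hx
        obtain ⟨s, hs, hx⟩ := hx
        have h2 : s • x ∈ W := ih hx
        have h3 : x ∈ coreSeq S V j := by
          have := mem_coreSeq_succ.1 h2 s⁻¹ (hinv s hs)
          simpa using this
        by_contra h4
        exact hxB ⟨h3, h4⟩
  have hgo : ∀ g : G, ∀ x ∈ W, g • x ∉ W → ∃ n, x ∈ reach S A B n := by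
    intro g
    have key : ∀ (g s : G), s ∈ S → (∀ x ∈ W, g • x ∉ W → ∃ n, x ∈ reach S A B n) →
        ∀ x ∈ W, (g * s) • x ∉ W → ∃ n, x ∈ reach S A B n := by
      intro g s hs ih x hx hgx
      by_cases hxA : x ∈ A
      · exact ⟨0, hxA⟩
      have hx2 : x ∈ coreSeq S V (j + 2) := by
        by_contra h; exact hxA ⟨hx, h⟩
      obtain ⟨n, hn⟩ := ih (s • x) (mem_coreSeq_succ.1 hx2 s hs) (by rwa [← mul_smul])
      refine ⟨n + 1, Or.inr ⟨?_, fun h => h.2 hx⟩⟩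
      simp only [Set.mem_iUnion]
      exact ⟨s, hs, hn⟩
    have hg : g ∈ Subgroup.closure S := by rw [hgen]; trivial
    induction hg using Subgroup.closure_induction_right with
    | one => intro x hx hx'; simp at hx'; exact absurd hx hx'
    | mul_right g _ s hs ih => exact key g s hs ih
    | mul_inv_cancel g _ s hs ih => exact key g s⁻¹ (hinv s hs) ih
  have hWeq : W = (⋃ n, reach S A B n) ∪ ⋂ g : G, (fun x => g • x) ⁻¹' W := by
    ext x
    constructor
    · intro hx
      by_cases h : ∀ g : G, g • x ∈ W
      · exact Or.inr (Set.mem_iInter.2 h)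
      · push Not at h
        obtain ⟨g, hg⟩ := h
        exact Or.inl (Set.mem_iUnion.2 (hgo g x hx hg))
    · rintro (hx | hx)
      · obtain ⟨n, hn⟩ := Set.mem_iUnion.1 hx
        exact hsub n hn
      · simpa using Set.mem_iInter.1 hx 1
  have hWm : MeasurableSet[sigmaG G ξ ⊔ invSigma G X] W := by
    rw [hWeq]
    refine MeasurableSet.union ?_ ?_
    · exact (le_sup_left : sigmaG G ξ ≤ sigmaG G ξ ⊔ invSigma G X) _ (MeasurableSet.iUnion hreach)
    · refine (le_sup_right : invSigma G X ≤ sigmaG G ξ ⊔ invSigma G X) _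
        (MeasurableSpace.measurableSet_generateFrom ⟨?_, ?_⟩)
      · exact MeasurableSet.iInter fun g => hact g (hV _)
      · intro h
        ext x
        simp only [Set.mem_preimage, Set.mem_iInter, ← mul_smul]
        constructor
        · intro H g; simpa using H (g * h⁻¹)
        · intro H g; exact H _
  -- the join is invariant
  have hjoin : ∀ (g : G) (C : Set X), MeasurableSet[sigmaG G ξ ⊔ invSigma G X] C →
      MeasurableSet[sigmaG G ξ ⊔ invSigma G X] ((fun x => g • x) ⁻¹' C) := by
    intro g C hC
    have hle : sigmaG G ξ ⊔ invSigma G X ≤ MeasurableSpace.map (fun x : X => g • x)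
        (sigmaG G ξ ⊔ invSigma G X) := by
      refine sup_le ?_ (MeasurableSpace.generateFrom_le ?_)
      · intro D hD
        exact (le_sup_left : sigmaG G ξ ≤ sigmaG G ξ ⊔ invSigma G X) _ (aux_meas_smul G ξ g hD)
      · rintro D ⟨hD, hD'⟩
        change MeasurableSet[sigmaG G ξ ⊔ invSigma G X] ((fun x => g • x) ⁻¹' D)
        rw [hD']
        exact (le_sup_right : invSigma G X ≤ sigmaG G ξ ⊔ invSigma G X) _
          (MeasurableSpace.measurableSet_generateFrom ⟨hD, hD'⟩)
    exact hle _ hC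
  induction k, hk using Nat.le_induction with
  | base => exact hWm
  | succ k _ ih => exact MeasurableSet.biInter hS.countable fun s _ => hjoin s _ ih

theorem exists_small_pair {X : Type*} [MeasurableSpace X] (μ : Measure X)
    [IsProbabilityMeasure μ] (V : ℕ → Set X) (hV : ∀ n, MeasurableSet (V n)) (hanti : Antitone V)
    (N : ℕ) (δ : ℝ) (hN : 1 < N * δ) :
    ∃ i < N, μ.real (V (2 * i) \ V (2 * i + 2)) < δ := by
  by_contra! h
  have h1 : ∑ i ∈ Finset.range N, μ.real (V (2 * i) \ V (2 * i + 2)) =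
      ∑ i ∈ Finset.range N, (μ.real (V (2 * i)) - μ.real (V (2 * (i + 1)))) := by
    refine Finset.sum_congr rfl fun i _ => ?_
    exact measureReal_sdiff (hanti (by omega)) (hV _)
  have h2 : (N : ℝ) * δ ≤ ∑ i ∈ Finset.range N, μ.real (V (2 * i) \ V (2 * i + 2)) := by
    have := Finset.card_nsmul_le_sum (Finset.range N)
      (fun i => μ.real (V (2 * i) \ V (2 * i + 2))) δ (fun i hi => h i (Finset.mem_range.1 hi))
    simpa using this
  rw [h1, Finset.sum_range_sub' (fun i => μ.real (V (2 * i)))] at h2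
  have h3 : μ.real (V (2 * 0)) ≤ 1 := measureReal_le_one
  have h4 : 0 ≤ μ.real (V (2 * N)) := measureReal_nonneg
  linarith

/-- Lemma 5.5: for a finitely generated infinite group and a finite
`G`-invariant set `P ⊆ L^G`, every open neighborhood of `P` contains a clopen
neighborhood `V` of `P` whose outer Rokhlin entropy is less than `ε` for every invariant
Borel probability measure. -/
theorem statement13 {G L : Type*} [Group G] [Infinite G] [Group.FG G]
    [Fintype L] [TopologicalSpace L] [DiscreteTopology L]
    [mGL : MeasurableSpace (G → L)] [BorelSpace (G → L)]
    (P : Set (G → L)) (hPfin : P.Finite)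
    (hPinv : ∀ g : G, (fun x : G → L => g • x) ⁻¹' P = P)
    (ε : ℝ) (hε : 0 < ε) (U : Set (G → L)) (hU : IsOpen U) (hPU : P ⊆ U) :
    ∃ V : Set (G → L), IsClopen V ∧ P ⊆ V ∧ V ⊆ U ∧
      ∀ μ : Measure (G → L), IsProbabilityMeasure μ → IsPmp G μ →
        outerRokhlin G {V} ⊥ μ < ENNReal.ofReal ε := by
  have hcount : Countable G := by
    obtain ⟨S₁, hS₁, hfin⟩ := (Group.fg_iff (G := G)).1 inferInstance
    have := hfin.countable.to_subtype
    have hsurj : Function.Surjective (FreeGroup.lift ((↑) : S₁ → G)) := by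
      rw [← MonoidHom.range_eq_top, FreeGroup.range_lift_eq_closure, Subtype.range_coe, hS₁]
    have : Countable (FreeGroup S₁) := Quot.mk_surjective.countable
    exact hsurj.countable
  obtain ⟨V₀, hV₀, hPV₀, hV₀U⟩ : ∃ V : Set (G → L), IsClopen V ∧ P ⊆ V ∧ V ⊆ U := by
    exact exists_clopen_of_closed_subset_open hPfin.isClosed hU hPU
  obtain ⟨S₀, hS₀⟩ := (Group.fg_def.1 ‹Group.FG G›)
  set S : Set G := insert 1 ((S₀ : Set G) ∪ (S₀ : Set G)⁻¹) with hSdef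
  have hSfin : S.Finite := (S₀.finite_toSet.union S₀.finite_toSet.inv).insert 1
  have h1 : (1 : G) ∈ S := Set.mem_insert _ _
  have hinv : ∀ s ∈ S, s⁻¹ ∈ S := by
    rintro s (rfl | hs | hs)
    · simpa using h1
    · exact Or.inr (Or.inr (by simpa using hs))
    · exact Or.inr (Or.inl hs)
  have hgen : Subgroup.closure S = ⊤ := by
    rw [eq_top_iff, ← hS₀]
    exact Subgroup.closure_mono fun s hs => Or.inr (Or.inl hs)
  have hcont : ∀ g : G, Continuous (fun x : G → L => g • x) := fun g =>
    continuous_pi fun h => continuous_apply (g⁻¹ * h)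
  have hclopen : ∀ n, IsClopen (coreSeq S V₀ n) := by
    intro n
    induction n with
    | zero => exact hV₀
    | succ n ih => exact hSfin.isClopen_biInter fun s _ => ih.preimage (hcont s)
  have hmeas : ∀ n, MeasurableSet (coreSeq S V₀ n) := fun n => (hclopen n).isOpen.measurableSet
  have hact : ∀ g : G, Measurable (fun x : G → L => g • x) := fun g => (hcont g).measurable
  have hP : ∀ n, P ⊆ coreSeq S V₀ n := by
    intro n
    induction n with
    | zero => exact hPV₀
    | succ n ih =>
      intro x hx
      refine mem_coreSeq_succ.2 fun s _ => ih ?_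
      rw [← hPinv s] at hx
      exact hx
  have hanti := coreSeq_anti (X := G → L) h1 V₀
  -- constants
  set t : ℝ := min (ε / 8) (1 / 2) with ht
  have ht0 : 0 < t := lt_min (by linarith) (by norm_num)
  have ht1 : t < 1 := lt_of_le_of_lt (min_le_right _ _) (by norm_num)
  have htε : t ≤ ε / 8 := min_le_left _ _
  have hc : 0 < 1 - Real.log t := by have := Real.log_neg ht0 ht1; linarith
  set δ : ℝ := ε / 4 / (1 - Real.log t) with hδ
  have hδ0 : 0 < δ := by positivity
  obtain ⟨N, hN⟩ := exists_nat_gt (1 / δ)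
  have hN' : 1 < N * δ := by rwa [div_lt_iff₀ hδ0] at hN
  refine ⟨coreSeq S V₀ (2 * N), hclopen _, hP _, (hanti (Nat.zero_le _)).trans hV₀U, ?_⟩
  intro μ hμ _
  obtain ⟨i, hiN, hi⟩ := exists_small_pair μ _ hmeas hanti N δ hN'
  set B := coreSeq S V₀ (2 * i) \ coreSeq S V₀ (2 * i + 1) with hB
  set A := coreSeq S V₀ (2 * i + 1) \ coreSeq S V₀ (2 * i + 2) with hA
  have hAm : MeasurableSet A := (hmeas _).diff (hmeas _)
  have hBm : MeasurableSet B := (hmeas _).diff (hmeas _)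
  have hAB : Disjoint A B := Set.disjoint_left.2 fun x hx hx' => hx'.2 hx.1
  have hun : A ∪ B ⊆ coreSeq S V₀ (2 * i) \ coreSeq S V₀ (2 * i + 2) := by
    rintro x (hx | hx)
    · exact ⟨hanti (Nat.le_succ _) hx.1, hx.2⟩
    · exact ⟨hx.1, fun h => hx.2 (hanti (Nat.le_succ _) h)⟩
  have hμu : μ.real (A ∪ B) < δ := (measureReal_mono hun).trans_lt hi
  have hle : outerRokhlin G {coreSeq S V₀ (2 * N)} ⊥ μ ≤
      condEnt (⊥ ⊔ invSigma G (G → L)) μ (triPart A B) := by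
    refine sInf_le ⟨triPart A B, triPart_isPartition hAm hBm hAB, ?_, rfl⟩
    rintro _ rfl
    refine ⟨_, ?_, by rw [symmDiff_self]; exact measure_empty⟩
    rw [sup_bot_eq]
    exact coreSeq_measurable hact hSfin h1 hinv hgen V₀ hmeas (2 * i) (Set.range (triPart A B))
      ⟨1, rfl⟩ ⟨2, rfl⟩ (2 * N) (by omega)
  refine hle.trans_lt ((condEnt_triPart_le _ (sup_le bot_le (aux_invSigma_le G _)) μ hAm hBm hAB
    t ht0 ht1).trans_lt ?_)
  rw [ENNReal.ofReal_lt_ofReal_iff hε]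
  have h5 : μ.real (A ∪ B) * (1 - Real.log t) ≤ ε / 4 := by
    calc μ.real (A ∪ B) * (1 - Real.log t) ≤ δ * (1 - Real.log t) := by gcongr
      _ = ε / 4 := by rw [hδ]; field_simp
  linarith
end
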